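/- arXiv:1503.02862 — 5 statements merged into one kernel-verified Lean document; each statement's English description precedes it below -/
import Mathlib

section
/- Under the stated hypotheses on φ, the identity ∫₀^∞ s^{a+3}·(φ(s)² + φ'(s)²) ds = (3(a+2)/2)·∫₀^∞ s^{a+1}·φ(s)² ds holds. -/
open MeasureTheory Real Filter Topology in
theorem aux_int (f : ℝ → ℝ) (hf : ContinuousOn f (Set.Ioi 0)) (M K b : ℝ) (hb : 0 < b)
    (h0 : ∀ s ∈ Set.Ioc (0:ℝ) 1, |f s| ≤ M)
    (h1 : ∀ s : ℝ, 1 ≤ s → |f s| ≤ K * (s ^ (4:ℝ) * Real.exp (-b * s))) :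
    IntegrableOn f (Set.Ioi 0) := by
  rw [← Set.Ioc_union_Ioi_eq_Ioi (zero_le_one : (0:ℝ) ≤ 1)]
  refine IntegrableOn.union ?_ ?_
  · have hc : IntegrableOn (fun _ : ℝ => M) (Set.Ioc (0:ℝ) 1) := by
      refine integrableOn_const (by simp) 
    refine Integrable.mono' hc ((hf.mono Set.Ioc_subset_Ioi_self).aestronglyMeasurable measurableSet_Ioc) ?_
    filter_upwards [ae_restrict_mem measurableSet_Ioc] with s hs
    exact h0 s hs
  · have hg : IntegrableOn (fun s : ℝ => s ^ (4:ℝ) * Real.exp (-b * s)) (Set.Ioi 0) := by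
      have := integrableOn_rpow_mul_exp_neg_mul_rpow (p := 1) (s := 4) (b := b) (by norm_num) (by norm_num) hb
      simpa using this
    have hg' := (hg.mono_set (Set.Ioi_subset_Ioi (zero_le_one : (0:ℝ) ≤ 1))).const_mul K
    refine Integrable.mono' hg' ((hf.mono (Set.Ioi_subset_Ioi zero_le_one)).aestronglyMeasurable measurableSet_Ioi) ?_
    filter_upwards [ae_restrict_mem measurableSet_Ioi] with s hs
    exact h1 s (le_of_lt hs)

open MeasureTheory Real in
theorem stmt_1 (γ a : ℝ) (hγ : γ ∈ Set.Ioo (0:ℝ) 1) (ha : a = 1 - 2*γ)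
    (φ : ℝ → ℝ) (hφ : ContDiffOn ℝ 2 φ (Set.Ioi 0))
    (hode : ∀ s : ℝ, 0 < s → deriv (deriv φ) s + (a / s) * deriv φ s - φ s = 0)
    (hbdd : ∃ C : ℝ, ∀ s ∈ Set.Ioc (0:ℝ) 1, |φ s| ≤ C)
    (hbdd' : ∃ C : ℝ, ∀ s ∈ Set.Ioc (0:ℝ) 1, |s ^ a * deriv φ s| ≤ C)
    (hdecay : ∃ C δ : ℝ, 0 < C ∧ 0 < δ ∧
      ∀ s : ℝ, 1 ≤ s → |φ s| + |deriv φ s| ≤ C * Real.exp (-δ * s)) :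
    ∫ s in Set.Ioi (0:ℝ), s ^ (a+3) * ((φ s)^2 + (deriv φ s)^2) =
      (3*(a+2)/2) * ∫ s in Set.Ioi (0:ℝ), s ^ (a+1) * (φ s)^2 := by
  obtain ⟨C₀, hC₀⟩ := hbdd
  obtain ⟨C₁, hC₁⟩ := hbdd'
  obtain ⟨C, δ, hC, hδ, hdec⟩ := hdecay
  have ha1 : a < 1 := by linarith [hγ.1]
  have ha2 : -1 < a := by linarith [hγ.2]
  have hC₀p : 0 ≤ C₀ := (abs_nonneg _).trans (hC₀ 1 (by simp))
  have hC₁p : 0 ≤ C₁ := (abs_nonneg _).trans (hC₁ 1 (by simp))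
  have hd1 : ∀ s : ℝ, 0 < s → HasDerivAt φ (deriv φ s) s := fun s hs =>
    ((hφ.differentiableOn (by norm_num)).differentiableAt (Ioi_mem_nhds hs)).hasDerivAt
  have hφ' : ContDiffOn ℝ 1 (deriv φ) (Set.Ioi 0) :=
    hφ.deriv_of_isOpen isOpen_Ioi (by norm_num)
  have hd2 : ∀ s : ℝ, 0 < s → HasDerivAt (deriv φ) (φ s - a / s * deriv φ s) s := fun s hs => by
    have := ((hφ'.differentiableOn (by norm_num)).differentiableAt (Ioi_mem_nhds hs)).hasDerivAt
    refine this.congr_deriv ?_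
    linarith [hode s hs]
  have hcr : ∀ p : ℝ, ContinuousOn (fun s : ℝ => s ^ p) (Set.Ioi 0) := fun p s hs =>
    (Real.continuousAt_rpow_const s p (Or.inl (ne_of_gt hs))).continuousWithinAt
  have hexp : ∀ s : ℝ, Real.exp (-(2*δ) * s) = Real.exp (-δ * s) ^ 2 := fun s => by
    rw [← Real.exp_nat_mul]; congr 1; push_cast; ring
  -- bounds for large s
  have hb1 : ∀ s : ℝ, 1 ≤ s → φ s ^ 2 + deriv φ s ^ 2 ≤ C ^ 2 * Real.exp (-(2*δ) * s) := by
    intro s hs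
    rw [hexp, ← mul_pow, ← sq_abs (φ s), ← sq_abs (deriv φ s)]
    have := pow_le_pow_left₀ (by positivity) (hdec s hs) 2
    nlinarith [mul_nonneg (abs_nonneg (φ s)) (abs_nonneg (deriv φ s))]
  have hb0 : ∀ s : ℝ, 1 ≤ s → ∀ p ≤ (4:ℝ), s ^ p ≤ s ^ (4:ℝ) := fun s hs p hp =>
    Real.rpow_le_rpow_of_exponent_le hs hp
  have hs1 : ∀ s ∈ Set.Ioc (0:ℝ) 1, ∀ p : ℝ, 0 ≤ p → s ^ p ≤ 1 := fun s hs p hp =>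
    Real.rpow_le_one hs.1.le hs.2 hp
  have hφc := hφ.continuousOn
  have hφc' := hφ'.continuousOn
  have hI1 : IntegrableOn (fun s => s ^ (a+3) * ((φ s)^2 + (deriv φ s)^2)) (Set.Ioi 0) := by
    refine aux_int _ ((hcr _).mul ((hφc.pow 2).add (hφc'.pow 2))) (C₀^2 + C₁^2) (C^2) (2*δ)
      (by positivity) ?_ ?_
    · intro s hs
      have hs0 := hs.1
      rw [abs_of_nonneg (by positivity), mul_add]
      refine add_le_add ?_ ?_
      · have h := pow_le_pow_left₀ (abs_nonneg _) (hC₀ s hs) 2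
        rw [sq_abs] at h
        calc _ ≤ 1 * φ s ^ 2 := by gcongr; exact hs1 s hs _ (by linarith)
          _ ≤ _ := by linarith
      · have h := pow_le_pow_left₀ (abs_nonneg _) (hC₁ s hs) 2
        rw [sq_abs] at h
        have e : s ^ (a+3) * deriv φ s ^ 2 = s ^ (3-a) * (s ^ a * deriv φ s)^2 := by
          rw [show a + 3 = (3 - a) + a + a by ring, Real.rpow_add hs0, Real.rpow_add hs0]; ring
        rw [e]
        calc _ ≤ 1 * (s ^ a * deriv φ s)^2 := by gcongr; exact hs1 s hs _ (by linarith)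
          _ ≤ _ := by linarith
    · intro s hs
      have hs0 : 0 < s := by linarith
      rw [abs_of_nonneg (by positivity)]
      calc _ ≤ s ^ (4:ℝ) * (C ^ 2 * Real.exp (-(2*δ) * s)) := by
            gcongr
            · linarith
            · exact hb1 s hs
        _ = _ := by ring
  have hI2 : IntegrableOn (fun s => s ^ (a+1) * (φ s)^2) (Set.Ioi 0) := by
    refine aux_int _ ((hcr _).mul (hφc.pow 2)) (C₀^2) (C^2) (2*δ)
      (by positivity) ?_ ?_
    · intro s hs
      have hs0 := hs.1
      rw [abs_of_nonneg (by positivity)]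
      have h := pow_le_pow_left₀ (abs_nonneg _) (hC₀ s hs) 2
      rw [sq_abs] at h
      calc _ ≤ 1 * φ s ^ 2 := by gcongr; exact hs1 s hs _ (by linarith)
          _ ≤ _ := by linarith
    · intro s hs
      have hs0 : 0 < s := by linarith
      rw [abs_of_nonneg (by positivity)]
      calc _ ≤ s ^ (4:ℝ) * (C ^ 2 * Real.exp (-(2*δ) * s)) := by
            gcongr
            · linarith
            · linarith [hb1 s hs, sq_nonneg (deriv φ s)]
        _ = _ := by ring
  set F : ℝ → ℝ := fun s => s ^ (a+3) * (φ s * deriv φ s) - 3/2 * (s ^ (a+2) * φ s ^ 2) with hF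
  have hF0 : F 0 = 0 := by
    simp only [hF]
    rw [Real.zero_rpow (by linarith), Real.zero_rpow (by linarith)]; ring
  have hderiv : ∀ s ∈ Set.Ioi (0:ℝ), HasDerivAt F
      (s ^ (a+3) * ((φ s)^2 + (deriv φ s)^2) - (3*(a+2)/2) * (s ^ (a+1) * (φ s)^2)) s := by
    intro s hs
    have hs0 : 0 < s := hs
    have r1 := Real.hasDerivAt_rpow_const (x := s) (p := a+3) (Or.inl hs0.ne')
    have r2 := Real.hasDerivAt_rpow_const (x := s) (p := a+2) (Or.inl hs0.ne')
    have := (r1.mul ((hd1 s hs0).mul (hd2 s hs0))).sub ((r2.mul ((hd1 s hs0).pow 2)).const_mul (3/2))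
    refine this.congr_deriv ?_
    have e1 : s ^ (a+3) = s ^ a * s^3 := by rw [Real.rpow_add hs0]; norm_cast
    have e2 : s ^ (a+2) = s ^ a * s^2 := by rw [Real.rpow_add hs0]; norm_cast
    have e3 : s ^ (a+1) = s ^ a * s := by rw [Real.rpow_add hs0, Real.rpow_one]
    rw [show a + 3 - 1 = a + 2 by ring, show a + 2 - 1 = a + 1 by ring]
    simp only [Pi.mul_apply, Pi.pow_apply, e1, e2, e3]
    field_simp
    push_cast
    ring
  have hcont : ContinuousWithinAt F (Set.Ici 0) 0 := by
    rw [← continuousWithinAt_Ioi_iff_Ici]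
    unfold ContinuousWithinAt
    rw [hF0]
    have hlim : Filter.Tendsto (fun s : ℝ => (C₀ * C₁ + 3/2*C₀^2) * s) (nhdsWithin 0 (Set.Ioi 0)) (nhds 0) := by
      have : Continuous (fun s : ℝ => (C₀ * C₁ + 3/2*C₀^2) * s) := by fun_prop
      have h := (this.tendsto 0).mono_left (nhdsWithin_le_nhds (s := Set.Ioi 0))
      simpa using h
    refine squeeze_zero_norm' ?_ hlim
    filter_upwards [Ioc_mem_nhdsGT (zero_lt_one : (0:ℝ) < 1)] with s hs
    have hs0 := hs.1
    have e1 : s ^ (a+3) * (φ s * deriv φ s) = s^3 * (φ s * (s ^ a * deriv φ s)) := by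
      rw [Real.rpow_add hs0]; norm_cast; ring
    have e2 : s ^ (a+2) = s ^ (a+1) * s := by
      rw [← Real.rpow_add_one hs0.ne']; congr 1; ring
    have h2 := pow_le_pow_left₀ (abs_nonneg _) (hC₀ s hs) 2
    have h3 : s^3 ≤ s := by
      have := pow_le_one₀ hs0.le hs.2 (n := 2)
      nlinarith
    simp only [hF]
    rw [e1, e2]
    refine (norm_sub_le _ _).trans ?_
    rw [add_mul]
    refine add_le_add ?_ ?_
    · rw [Real.norm_eq_abs, abs_mul, abs_mul, abs_of_pos (by positivity : 0 < s^3)]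
      calc _ ≤ s * (C₀ * C₁) := by
            gcongr
            · exact hC₀ s hs
            · exact hC₁ s hs
        _ = _ := by ring
    · rw [sq_abs] at h2
      rw [Real.norm_eq_abs, abs_of_nonneg (by positivity)]
      calc _ ≤ 3/2 * (1 * s * C₀^2) := by
            gcongr; exact hs1 s hs _ (by linarith)
        _ = _ := by ring
  have htop : Filter.Tendsto F Filter.atTop (nhds 0) := by
    have hlim := (tendsto_rpow_mul_exp_neg_mul_atTop_nhds_zero 4 (2*δ) (by positivity)).const_mul (3 * C^2)
    rw [mul_zero] at hlim
    refine squeeze_zero_norm' ?_ hlim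
    filter_upwards [Filter.eventually_ge_atTop 1] with s hs
    have hs0 : 0 < s := by linarith
    have hb := hb1 s hs
    have hpq : |φ s * deriv φ s| ≤ C ^ 2 * Real.exp (-(2*δ) * s) := by
      refine le_trans ?_ hb
      rw [abs_mul, ← sq_abs (φ s), ← sq_abs (deriv φ s)]
      nlinarith [sq_nonneg (|φ s| - |deriv φ s|), sq_nonneg (|φ s|), sq_nonneg (|deriv φ s|)]
    simp only [hF]
    refine (norm_sub_le _ _).trans ?_
    rw [Real.norm_eq_abs, Real.norm_eq_abs, abs_mul, abs_of_pos (by positivity : 0 < s^(a+3)),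
      abs_of_nonneg (by positivity : 0 ≤ 3/2 * (s ^ (a+2) * φ s ^ 2))]
    calc _ ≤ s^(4:ℝ) * (C ^ 2 * Real.exp (-(2*δ) * s)) + 3/2 * (s^(4:ℝ) * (C ^ 2 * Real.exp (-(2*δ) * s))) := by
          gcongr
          · linarith
          · linarith
          · linarith [sq_nonneg (deriv φ s)]
      _ ≤ _ := by
          have : 0 ≤ s^(4:ℝ) * (C ^ 2 * Real.exp (-(2*δ) * s)) := by positivity
          linarith
  have hI := integral_Ioi_of_hasDerivAt_of_tendsto hcont hderiv (hI1.sub (hI2.const_mul _)) htop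
  rw [integral_sub hI1 (hI2.const_mul _), integral_const_mul, hF0] at hI
  linarith
end

section
/- Under the stated hypotheses on φ, the identity ∫₀^∞ s^{a+4}·φ'(s)² ds = ((a+5)(a+3)/5)·∫₀^∞ s^{a+2}·φ(s)² ds holds. -/
open MeasureTheory Real Filter Topology in
lemma aux_top (g : ℝ → ℝ) (K b p : ℝ) (hb : 0 < b)
    (hg : ∀ s : ℝ, 0 < s → |g s| ≤ K * Real.exp (-b * s)) :
    Tendsto (fun s => s ^ p * g s) atTop (𝓝 0) := by
  have h := (tendsto_rpow_mul_exp_neg_mul_atTop_nhds_zero p b hb).const_mul K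
  rw [mul_zero] at h
  refine squeeze_zero_norm' ?_ h
  filter_upwards [eventually_gt_atTop 0] with s hs
  rw [norm_mul, Real.norm_eq_abs, Real.norm_eq_abs, abs_of_nonneg (Real.rpow_nonneg hs.le p)]
  have := mul_le_mul_of_nonneg_left (hg s hs) (Real.rpow_nonneg hs.le p)
  linarith

open MeasureTheory Real Filter Topology in
lemma aux_zero (g : ℝ → ℝ) (K b p : ℝ) (hp : 0 < p)
    (hg : ∀ s : ℝ, 0 < s → |g s| ≤ K * Real.exp (-b * s)) :
    Tendsto (fun s => s ^ p * g s) (𝓝[>] 0) (𝓝 0) := by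
  have h : Tendsto (fun s : ℝ => s ^ p * (K * Real.exp (-b * s))) (𝓝[>] 0) (𝓝 0) := by
    have : ContinuousAt (fun s : ℝ => s ^ p * (K * Real.exp (-b * s))) 0 := by
      refine (Real.continuousAt_rpow_const 0 p (Or.inr hp.le)).mul ?_
      fun_prop
    have h2 := this.tendsto
    simp only [Real.zero_rpow hp.ne', zero_mul] at h2
    exact h2.mono_left nhdsWithin_le_nhds
  refine squeeze_zero_norm' ?_ h
  filter_upwards [self_mem_nhdsWithin] with s hs
  have hs : 0 < s := hs
  rw [norm_mul, Real.norm_eq_abs, Real.norm_eq_abs, abs_of_nonneg (Real.rpow_nonneg hs.le p)]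
  exact mul_le_mul_of_nonneg_left (hg s hs) (Real.rpow_nonneg hs.le p)

open MeasureTheory Real Filter Topology in
lemma aux_int_s3 (g : ℝ → ℝ) (K b p : ℝ) (hp : 0 < p) (hb : 0 < b)
    (hc : ContinuousOn g (Set.Ioi 0))
    (hg : ∀ s : ℝ, 0 < s → |g s| ≤ K * Real.exp (-b * s)) :
    IntegrableOn (fun s => s ^ p * g s) (Set.Ioi 0) := by
  have h := (integrableOn_rpow_mul_exp_neg_mul_rpow (p := 1) (s := p) (b := b)
    (by linarith) one_pos hb).const_mul K
  refine Integrable.mono' h ?_ ?_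
  · refine ContinuousOn.aestronglyMeasurable ?_ measurableSet_Ioi
    refine ContinuousOn.mul ?_ hc
    exact fun x hx => (Real.continuousAt_rpow_const x p (Or.inr hp.le)).continuousWithinAt
  · refine (ae_restrict_iff' measurableSet_Ioi).2 (Eventually.of_forall fun s hs => ?_)
    have hs : 0 < s := hs
    rw [norm_mul, Real.norm_eq_abs, Real.norm_eq_abs, abs_of_nonneg (Real.rpow_nonneg hs.le p)]
    have := mul_le_mul_of_nonneg_left (hg s hs) (Real.rpow_nonneg hs.le p)
    rw [Real.rpow_one]
    linarith

lemma aux_glue (g : ℝ → ℝ) (C0 C d : ℝ) (hd : 0 < d) (hC : 0 < C)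
    (h0 : ∀ s ∈ Set.Ioc (0:ℝ) 1, |g s| ≤ C0)
    (h1 : ∀ s : ℝ, 1 ≤ s → |g s| ≤ C * s * Real.exp (-d * s)) :
    ∃ K : ℝ, 0 ≤ K ∧ ∀ s : ℝ, 0 < s → |g s| ≤ K * Real.exp (-(d/2) * s) := by
  have hC0 : 0 ≤ C0 := (abs_nonneg _).trans (h0 1 ⟨one_pos, le_rfl⟩)
  refine ⟨C0 * Real.exp (d/2) + C * (2/d), by positivity, fun s hs => ?_⟩
  rcases le_total s 1 with h | h
  · have e : 1 ≤ Real.exp (d/2) * Real.exp (-(d/2) * s) := by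
      rw [← Real.exp_add]; apply Real.one_le_exp; nlinarith
    have := h0 s ⟨hs, h⟩
    have h3 : 0 ≤ C * (2/d) * Real.exp (-(d/2) * s) := by positivity
    nlinarith
  · have e : Real.exp (-d * s) = Real.exp (-(d/2) * s) * Real.exp (-(d/2) * s) := by
      rw [← Real.exp_add]; ring_nf
    have e2 : s * Real.exp (-(d/2) * s) ≤ 2/d := by
      have h3 := Real.add_one_le_exp (d/2*s)
      have h4 : Real.exp (-(d/2) * s) * Real.exp (d/2*s) = 1 := by
        rw [← Real.exp_add]; simp
      have h5 := Real.exp_pos (-(d/2) * s)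
      rw [le_div_iff₀ hd]
      nlinarith
    have h6 := h1 s h
    rw [e] at h6
    have h5 := Real.exp_pos (-(d/2) * s)
    have h7 : C * Real.exp (-(d/2) * s) * (s * Real.exp (-(d/2) * s)) ≤ C * Real.exp (-(d/2) * s) * (2/d) :=
      mul_le_mul_of_nonneg_left e2 (by positivity)
    have h8 : 0 ≤ C0 * Real.exp (d/2) * Real.exp (-(d/2) * s) := by positivity
    nlinarith

lemma aux_mul (f g : ℝ → ℝ) (K L b : ℝ) (hK : 0 ≤ K)
    (hf : ∀ s : ℝ, 0 < s → |f s| ≤ K * Real.exp (-b * s))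
    (hg : ∀ s : ℝ, 0 < s → |g s| ≤ L * Real.exp (-b * s)) :
    ∀ s : ℝ, 0 < s → |f s * g s| ≤ (K * L) * Real.exp (-(2*b) * s) := by
  intro s hs
  rw [abs_mul]
  have h := mul_le_mul (hf s hs) (hg s hs) (abs_nonneg _) (by positivity)
  have e : Real.exp (-(2*b) * s) = Real.exp (-b * s) * Real.exp (-b * s) := by
    rw [← Real.exp_add]; ring_nf
  rw [e]; linarith

open MeasureTheory Real in
theorem stmt_3 (γ a : ℝ) (hγ : γ ∈ Set.Ioo (0:ℝ) 1) (ha : a = 1 - 2*γ)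
    (φ : ℝ → ℝ) (hφ : ContDiffOn ℝ 2 φ (Set.Ioi 0))
    (hode : ∀ s : ℝ, 0 < s → deriv (deriv φ) s + (a / s) * deriv φ s - φ s = 0)
    (hbdd : ∃ C : ℝ, ∀ s ∈ Set.Ioc (0:ℝ) 1, |φ s| ≤ C)
    (hbdd' : ∃ C : ℝ, ∀ s ∈ Set.Ioc (0:ℝ) 1, |s ^ a * deriv φ s| ≤ C)
    (hdecay : ∃ C δ : ℝ, 0 < C ∧ 0 < δ ∧
      ∀ s : ℝ, 1 ≤ s → |φ s| + |deriv φ s| ≤ C * Real.exp (-δ * s)) :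
    ∫ s in Set.Ioi (0:ℝ), s ^ (a+4) * (deriv φ s)^2 =
      ((a+5)*(a+3)/5) * ∫ s in Set.Ioi (0:ℝ), s ^ (a+2) * (φ s)^2 := by
  have ha1 : -1 < a := by linarith [hγ.2]
  have ha2 : a < 1 := by linarith [hγ.1]
  obtain ⟨C0, hC0⟩ := hbdd
  obtain ⟨C1, hC1⟩ := hbdd'
  obtain ⟨C, d, hC, hd, hdec⟩ := hdecay
  set w : ℝ → ℝ := fun s => s ^ a * deriv φ s with hw
  obtain ⟨K, hK, hKb⟩ := aux_glue φ C0 C d hd hC hC0 (fun s hs => by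
    have h1 := hdec s hs
    have h2 := abs_nonneg (deriv φ s)
    have h3 : 0 < C * Real.exp (-d * s) := by positivity
    nlinarith)
  obtain ⟨L, hL, hLb⟩ := aux_glue w C1 C d hd hC hC1 (fun s hs => by
    have h1 := hdec s hs
    have h2 := abs_nonneg (φ s)
    have hs0 : 0 < s := by linarith
    have h3 : s ^ a ≤ s := by
      simpa using Real.rpow_le_rpow_of_exponent_le hs ha2.le
    rw [hw]
    simp only
    rw [abs_mul, abs_of_nonneg (Real.rpow_nonneg hs0.le a)]
    have := mul_le_mul h3 (by linarith : |deriv φ s| ≤ C * Real.exp (-d * s)) (abs_nonneg _) hs0.le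
    linarith)
  have hff := aux_mul φ φ K K _ hK hKb hKb
  have hfw := aux_mul φ w K L _ hK hKb hLb
  have hww := aux_mul w w L L _ hL hLb hLb
  have hb : 0 < 2 * (d/2) := by positivity
  have hd1 : ∀ s : ℝ, 0 < s → HasDerivAt φ (deriv φ s) s := fun s hs =>
    ((hφ.differentiableOn (by norm_num)).differentiableAt (Ioi_mem_nhds hs)).hasDerivAt
  have hdd : ContDiffOn ℝ 1 (deriv φ) (Set.Ioi 0) :=
    ((contDiffOn_succ_iff_deriv_of_isOpen (n := 1) isOpen_Ioi).1 (by norm_num; exact hφ)).2.2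
  have hd2 : ∀ s : ℝ, 0 < s → HasDerivAt (deriv φ) (φ s - a / s * deriv φ s) s := fun s hs => by
    have := ((hdd.differentiableOn (by norm_num)).differentiableAt (Ioi_mem_nhds hs)).hasDerivAt
    refine this.congr_deriv ?_
    linarith [hode s hs]
  have hcw : ContinuousOn w (Set.Ioi 0) := by
    refine ContinuousOn.mul ?_ hdd.continuousOn
    exact fun x hx => (Real.continuousAt_rpow_const x a (Or.inl (ne_of_gt hx))).continuousWithinAt
  have hcf := hφ.continuousOn
  have key : ∀ s : ℝ, 0 < s → ∀ p : ℝ, s ^ (p - a - a) * (w s * w s) = s ^ p * (deriv φ s)^2 := by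
    intro s hs p
    rw [Real.rpow_sub hs, Real.rpow_sub hs]
    have := (Real.rpow_pos_of_pos hs a).ne'
    simp only [hw]
    field_simp
  have key2 : ∀ s : ℝ, 0 < s → ∀ p : ℝ, s ^ (p - a) * (φ s * w s) = s ^ p * (φ s * deriv φ s) := by
    intro s hs p
    rw [Real.rpow_sub hs]
    have := (Real.rpow_pos_of_pos hs a).ne'
    simp only [hw]
    field_simp
  have iX : IntegrableOn (fun s : ℝ => s ^ (a+4) * (deriv φ s)^2) (Set.Ioi 0) :=
    (aux_int_s3 _ _ _ (a + 4 - a - a) (by linarith) hb (hcw.mul hcw) hww).congr_fun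
      (fun s hs => key s hs _) measurableSet_Ioi
  have iY : IntegrableOn (fun s : ℝ => s ^ (a+2) * (φ s)^2) (Set.Ioi 0) :=
    (aux_int_s3 _ _ _ (a + 2) (by linarith) hb (hcf.mul hcf) hff).congr_fun
      (fun s hs => by simp only [Pi.mul_apply]; ring) measurableSet_Ioi
  set F : ℝ → ℝ := fun s => s ^ (a+5) * (deriv φ s)^2 - s ^ (a+5) * (φ s * φ s)
    + (a+5) * (s ^ (a+4) * (φ s * deriv φ s)) - 2 * (a+5) * (s ^ (a+3) * (φ s * φ s)) with hF
  set G : ℝ → ℝ := fun s => s ^ (a+5-a-a) * (w s * w s) - s ^ (a+5) * (φ s * φ s)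
    + (a+5) * (s ^ (a+4-a) * (φ s * w s)) - 2 * (a+5) * (s ^ (a+3) * (φ s * φ s)) with hG
  have hGF : ∀ s : ℝ, 0 < s → G s = F s := fun s hs => by
    simp only [hG, hF]; rw [key s hs, key2 s hs]
  have t0 : Filter.Tendsto F (nhdsWithin 0 (Set.Ioi 0)) (nhds 0) := by
    have h := (((aux_zero _ _ _ (a+5-a-a) (by linarith) hww).sub
      (aux_zero _ _ _ (a+5) (by linarith) hff)).add
      ((aux_zero _ _ _ (a+4-a) (by linarith) hfw).const_mul (a+5))).sub
      ((aux_zero _ _ _ (a+3) (by linarith) hff).const_mul (2*(a+5)))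
    simp only [mul_zero, sub_zero, add_zero] at h
    refine h.congr' ?_
    filter_upwards [self_mem_nhdsWithin] with s hs using hGF s hs
  have t1 : Filter.Tendsto F Filter.atTop (nhds 0) := by
    have h := (((aux_top _ _ _ (a+5-a-a) hb hww).sub
      (aux_top _ _ _ (a+5) hb hff)).add
      ((aux_top _ _ _ (a+4-a) hb hfw).const_mul (a+5))).sub
      ((aux_top _ _ _ (a+3) hb hff).const_mul (2*(a+5)))
    simp only [mul_zero, sub_zero, add_zero] at h
    refine h.congr' ?_
    filter_upwards [Filter.eventually_gt_atTop 0] with s hs using hGF s hs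
  have hder : ∀ s ∈ Set.Ioi (0:ℝ), HasDerivAt F
      (10 * (s ^ (a+4) * (deriv φ s)^2) - 2*(a+5)*(a+3) * (s ^ (a+2) * (φ s)^2)) s := by
    intro s hs
    have hs : 0 < s := hs
    have r := fun p : ℝ => Real.hasDerivAt_rpow_const (x := s) (p := p) (Or.inl hs.ne')
    have f1 := hd1 s hs
    have f2 := hd2 s hs
    have h := ((((r (a+5)).mul (f2.pow 2)).sub ((r (a+5)).mul (f1.mul f1))).add
      (((r (a+4)).mul (f1.mul f2)).const_mul (a+5))).sub
      (((r (a+3)).mul (f1.mul f1)).const_mul (2*(a+5)))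
    refine h.congr_deriv ?_
    have e5 : s ^ (a+5) = s ^ (a+2) * s^3 := by
      rw [← Real.rpow_natCast, ← Real.rpow_add hs]; norm_num [add_assoc]
    have e4 : s ^ (a+4) = s ^ (a+2) * s^2 := by
      rw [← Real.rpow_natCast, ← Real.rpow_add hs]; norm_num [add_assoc]
    have e3 : s ^ (a+3) = s ^ (a+2) * s := by
      rw [← Real.rpow_add_one hs.ne']; norm_num [add_assoc]
    rw [show a + 5 - 1 = a + 4 by ring, show a + 4 - 1 = a + 3 by ring,
      show a + 3 - 1 = a + 2 by ring]
    simp only [Pi.mul_apply, Pi.pow_apply]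
    rw [e5, e4, e3]
    field_simp
    push_cast
    ring
  have hF0 : F 0 = 0 := by
    simp only [hF]
    rw [Real.zero_rpow (by linarith), Real.zero_rpow (by linarith), Real.zero_rpow (by linarith)]
    ring
  have hc0 : ContinuousWithinAt F (Set.Ici 0) 0 := by
    rw [← continuousWithinAt_Ioi_iff_Ici]
    unfold ContinuousWithinAt
    rw [hF0]
    exact t0
  have hint := integral_Ioi_of_hasDerivAt_of_tendsto hc0 hder
    ((iX.const_mul 10).sub (iY.const_mul _)) t1
  rw [hF0] at hint
  rw [integral_sub (iX.const_mul 10) (iY.const_mul _), integral_const_mul, integral_const_mul] at hint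
  linarith
end

section
/- Under the stated hypotheses on φ, the identity ∫₀^∞ s^{a+4}·φ(s)² ds = ((a+3)(5−a)/5)·∫₀^∞ s^{a+2}·φ(s)² ds holds. -/
open MeasureTheory Real Filter Topology Set in
theorem aux_ftc (F f : ℝ → ℝ) (hd : ∀ x ∈ Ioi (0:ℝ), HasDerivAt F (f x) x)
    (hi : IntegrableOn f (Ioi 0)) (h0 : Tendsto F (𝓝[>] 0) (𝓝 0))
    (hinf : Tendsto F atTop (𝓝 0)) : ∫ x in Ioi (0:ℝ), f x = 0 := by
  have key := integral_Ioi_of_hasDerivAt_of_tendsto (f := Function.update F 0 0) (f' := f)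
    (a := 0) (m := 0) ?_ ?_ hi ?_
  · simpa using key
  · rw [← continuousWithinAt_Ioi_iff_Ici, continuousWithinAt_update_same]
    simpa using h0
  · intro x hx
    refine (hd x hx).congr_of_eventuallyEq ?_
    filter_upwards [lt_mem_nhds (show (0:ℝ) < x from hx)] with y hy
    simp [Function.update_of_ne hy.ne']
  · refine hinf.congr' ?_
    filter_upwards [eventually_gt_atTop 0] with y hy
    simp [Function.update_of_ne hy.ne']

open MeasureTheory Real Filter Topology Set in
theorem aux_inf (m C δ : ℝ) (hδ : 0 < δ) (u v : ℝ → ℝ)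
    (hu : ∀ s, 1 ≤ s → |u s| ≤ C * Real.exp (-δ * s))
    (hv : ∀ s, 1 ≤ s → |v s| ≤ C * Real.exp (-δ * s)) :
    Tendsto (fun s => s ^ m * (u s * v s)) atTop (𝓝 0) := by
  have h := (tendsto_rpow_mul_exp_neg_mul_atTop_nhds_zero m (2*δ) (by positivity)).mul_const (C^2)
  rw [zero_mul] at h
  refine squeeze_zero_norm' ?_ h
  filter_upwards [eventually_ge_atTop 1] with s hs
  have hp : 0 ≤ s ^ m := rpow_nonneg (by linarith) _
  rw [norm_eq_abs, abs_mul, abs_mul, abs_of_nonneg hp, mul_assoc]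
  refine mul_le_mul_of_nonneg_left ?_ hp
  calc _ ≤ (C * Real.exp (-δ * s)) * (C * Real.exp (-δ * s)) :=
        mul_le_mul (hu s hs) (hv s hs) (abs_nonneg _) ((abs_nonneg _).trans (hu s hs))
    _ = _ := by
      rw [show -(2*δ)*s = -δ*s + -δ*s by ring, Real.exp_add]; ring

open MeasureTheory Real Filter Topology Set in
theorem aux_zero_s4 (m C D : ℝ) (hm : 0 < m) (u v : ℝ → ℝ)
    (hu : ∀ s ∈ Ioc (0:ℝ) 1, |u s| ≤ C)
    (hv : ∀ s ∈ Ioc (0:ℝ) 1, |v s| ≤ D) :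
    Tendsto (fun s => s ^ m * (u s * v s)) (𝓝[>] 0) (𝓝 0) := by
  have h : Tendsto (fun s : ℝ => s ^ m * (C * D)) (𝓝[>] 0) (𝓝 0) := by
    have := ((continuousAt_rpow_const 0 m (Or.inr hm.le)).tendsto.mul_const (C*D)).mono_left
      (nhdsWithin_le_nhds (s := Ioi 0))
    simpa [zero_rpow hm.ne'] using this
  refine squeeze_zero_norm' ?_ h
  filter_upwards [Ioc_mem_nhdsGT (show (0:ℝ) < 1 by norm_num)] with s hs
  have hp : 0 ≤ s ^ m := rpow_nonneg hs.1.le _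
  rw [norm_eq_abs, abs_mul, abs_mul, abs_of_nonneg hp]
  exact mul_le_mul_of_nonneg_left (mul_le_mul (hu s hs) (hv s hs) (abs_nonneg _)
    ((abs_nonneg _).trans (hu s hs))) hp

open MeasureTheory Real Filter Topology Set in
theorem aux_int_s4 (m C D δ : ℝ) (hm : -1 < m) (hδ : 0 < δ) (u : ℝ → ℝ)
    (hc : ContinuousOn u (Ioi 0))
    (hu0 : ∀ s ∈ Ioc (0:ℝ) 1, |u s| ≤ D)
    (hu : ∀ s, 1 ≤ s → |u s| ≤ C * Real.exp (-δ * s)) :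
    IntegrableOn (fun s => s ^ m * (u s)^2) (Ioi 0) := by
  have h1 := (integrableOn_rpow_mul_exp_neg_mul_rpow hm one_pos
    (show 0 < 2*δ by positivity)).mul_const ((max C (D * Real.exp δ))^2)
  refine Integrable.mono' h1 ?_ ?_
  · refine ContinuousOn.aestronglyMeasurable ?_ measurableSet_Ioi
    refine ContinuousOn.mul (fun x hx => ?_) (hc.pow 2)
    exact (continuousAt_rpow_const x m (Or.inl (ne_of_gt hx))).continuousWithinAt
  · refine (ae_restrict_iff' measurableSet_Ioi).2 (Eventually.of_forall fun s hs => ?_)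
    have hs : 0 < s := hs
    have hp : 0 ≤ s ^ m := rpow_nonneg hs.le _
    have hb : |u s| ≤ max C (D * Real.exp δ) * Real.exp (-δ * s) := by
      rcases le_total 1 s with h | h
      · exact (hu s h).trans (mul_le_mul_of_nonneg_right (le_max_left _ _) (exp_nonneg _))
      · have hD := hu0 s ⟨hs, h⟩
        have hD0 : 0 ≤ D := (abs_nonneg _).trans hD
        calc |u s| ≤ D * 1 := by simpa using hD
          _ ≤ D * Real.exp (δ + -δ * s) := by
            refine mul_le_mul_of_nonneg_left (one_le_exp ?_) hD0
            nlinarith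
          _ = (D * Real.exp δ) * Real.exp (-δ * s) := by rw [Real.exp_add]; ring
          _ ≤ _ := mul_le_mul_of_nonneg_right (le_max_right _ _) (exp_nonneg _)
    rw [norm_eq_abs, abs_mul, abs_of_nonneg hp, abs_of_nonneg (sq_nonneg _), mul_assoc]
    refine mul_le_mul_of_nonneg_left ?_ hp
    rw [← sq_abs]
    calc _ ≤ (max C (D * Real.exp δ) * Real.exp (-δ * s))^2 :=
          pow_le_pow_left₀ (abs_nonneg _) hb 2
      _ = _ := by
        rw [rpow_one, show -(2*δ)*s = -δ*s + -δ*s by ring, Real.exp_add]; ring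


open MeasureTheory Real in
theorem stmt_4 (γ a : ℝ) (hγ : γ ∈ Set.Ioo (0:ℝ) 1) (ha : a = 1 - 2*γ)
    (φ : ℝ → ℝ) (hφ : ContDiffOn ℝ 2 φ (Set.Ioi 0))
    (hode : ∀ s : ℝ, 0 < s → deriv (deriv φ) s + (a / s) * deriv φ s - φ s = 0)
    (hbdd : ∃ C : ℝ, ∀ s ∈ Set.Ioc (0:ℝ) 1, |φ s| ≤ C)
    (hbdd' : ∃ C : ℝ, ∀ s ∈ Set.Ioc (0:ℝ) 1, |s ^ a * deriv φ s| ≤ C)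
    (hdecay : ∃ C δ : ℝ, 0 < C ∧ 0 < δ ∧
      ∀ s : ℝ, 1 ≤ s → |φ s| + |deriv φ s| ≤ C * Real.exp (-δ * s)) :
    ∫ s in Set.Ioi (0:ℝ), s ^ (a+4) * (φ s)^2 =
      ((a+3)*(5-a)/5) * ∫ s in Set.Ioi (0:ℝ), s ^ (a+2) * (φ s)^2 := by
  obtain ⟨hγ0, hγ1⟩ := hγ
  obtain ⟨C0, h0⟩ := hbdd
  obtain ⟨C1, h1⟩ := hbdd'
  obtain ⟨C, δ, hC, hδ, hdec⟩ := hdecay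
  have hu : ∀ s, 1 ≤ s → |φ s| ≤ C * Real.exp (-δ * s) := fun s hs => by
    have := hdec s hs; have := abs_nonneg (deriv φ s); linarith
  have hv : ∀ s, 1 ≤ s → |deriv φ s| ≤ C * Real.exp (-δ * s) := fun s hs => by
    have := hdec s hs; have := abs_nonneg (φ s); linarith
  have i4 := aux_int_s4 (a+4) C C0 δ (by linarith) hδ φ hφ.continuousOn h0 hu
  have i2 := aux_int_s4 (a+2) C C0 δ (by linarith) hδ φ hφ.continuousOn h0 hu
  have hd1 : ∀ s, 0 < s → HasDerivAt φ (deriv φ s) s := fun s hs =>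
    ((hφ.differentiableOn (by norm_num)).differentiableAt (Ioi_mem_nhds hs)).hasDerivAt
  have hd2 : ∀ s, 0 < s → HasDerivAt (deriv φ) (φ s - a / s * deriv φ s) s := fun s hs => by
    have h := (((contDiffOn_succ_iff_deriv_of_isOpen (n := 1) isOpen_Ioi).1
      (by simpa [one_add_one_eq_two] using hφ)).2.2.differentiableOn (by norm_num)).differentiableAt (Ioi_mem_nhds hs)
    have h2 := h.hasDerivAt
    rwa [show deriv (deriv φ) s = φ s - a / s * deriv φ s by linarith [hode s hs]] at h2
  have hr : ∀ (m s : ℝ), 0 < s → HasDerivAt (fun x : ℝ => x ^ m) (m * s ^ (m-1)) s :=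
    fun m s hs => Real.hasDerivAt_rpow_const (Or.inl hs.ne')
  have key := aux_ftc
    (fun s => 1/10 * (s ^ (a+5) * (φ s * φ s)) + (5-a)/10 * (s ^ (a+4) * (φ s * deriv φ s))
      + (-1/10) * (s ^ (a+5) * (deriv φ s * deriv φ s)) + (-(5-a)/5) * (s ^ (a+3) * (φ s * φ s)))
    (fun s => s ^ (a+4) * (φ s)^2 - ((a+3)*(5-a)/5) * (s ^ (a+2) * (φ s)^2))
    ?_ (i4.sub (i2.const_mul _)) ?_ ?_
  · rw [integral_sub i4 (i2.const_mul _), integral_const_mul] at key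
    linarith
  · intro s hs
    have hs : 0 < s := hs
    have A := ((hr (a+5) s hs).mul ((hd1 s hs).mul (hd1 s hs))).const_mul (1/10)
    have B := ((hr (a+4) s hs).mul ((hd1 s hs).mul (hd2 s hs))).const_mul ((5-a)/10)
    have D := ((hr (a+5) s hs).mul ((hd2 s hs).mul (hd2 s hs))).const_mul (-1/10)
    have E := ((hr (a+3) s hs).mul ((hd1 s hs).mul (hd1 s hs))).const_mul (-(5-a)/5)
    refine (((A.add B).add D).add E).congr_deriv ?_
    have e5 : s ^ (a+5) = s^(a+2) * s^3 := by
      rw [← Real.rpow_natCast, ← Real.rpow_add hs]; congr 1; push_cast; ring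
    have e4 : s ^ (a+4) = s^(a+2) * s^2 := by
      rw [← Real.rpow_natCast, ← Real.rpow_add hs]; congr 1; push_cast; ring
    have e3 : s ^ (a+3) = s^(a+2) * s := by
      rw [← Real.rpow_add_one hs.ne']; congr 1; ring
    rw [show a+5-1 = a+4 by ring, show a+4-1 = a+3 by ring, show a+3-1 = a+2 by ring]
    simp only [Pi.mul_apply, e5, e4, e3]
    field_simp
    ring
  · have A := (aux_zero_s4 (a+5) C0 C0 (by linarith) φ φ h0 h0).const_mul (1/10)
    have B := (aux_zero_s4 4 C0 C1 (by norm_num) φ _ h0 h1).const_mul ((5-a)/10)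
    have D := (aux_zero_s4 (5-a) C1 C1 (by linarith) _ _ h1 h1).const_mul (-1/10)
    have E := (aux_zero_s4 (a+3) C0 C0 (by linarith) φ φ h0 h0).const_mul (-(5-a)/5)
    have T := ((A.add B).add D).add E
    simp only [mul_zero, add_zero] at T
    refine T.congr' ?_
    filter_upwards [self_mem_nhdsWithin] with s hs
    have hs : 0 < s := hs
    have e4 : s ^ (a+4) = s^(4:ℝ) * s^a := by
      rw [← Real.rpow_add hs]; congr 1; ring
    have e5 : s ^ (a+5) = s^(5-a) * s^a * s^a := by
      rw [← Real.rpow_add hs, ← Real.rpow_add hs]; congr 1; ring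
    rw [e4, e5]; ring
  · have A := (aux_inf (a+5) C δ hδ φ φ hu hu).const_mul (1/10)
    have B := (aux_inf (a+4) C δ hδ φ _ hu hv).const_mul ((5-a)/10)
    have D := (aux_inf (a+5) C δ hδ _ _ hv hv).const_mul (-1/10)
    have E := (aux_inf (a+3) C δ hδ φ φ hu hu).const_mul (-(5-a)/5)
    have T := ((A.add B).add D).add E
    simpa only [mul_zero, add_zero] using T
end

section
/- Let γ ∈ (0,1) and let n be an integer with n > 4 + 2γ. Let ψ : (0,∞) → ℝ be twice continuously differentiable, satisfy the modified Bessel equation t²·ψ''(t) + t·ψ'(t) − (t² + γ²)·ψ(t) = 0 for all t > 0, and assume there are constants C, δ > 0 with |ψ(t)| ≤ C·t^{−γ} and |ψ'(t)| ≤ C·t^{−γ−1} for t ∈ (0,1], and |ψ(t)| + |ψ'(t)| ≤ C·e^{−δt} for t ≥ 1. Then (n−4)·∫₀^∞ t^{n−3}·ψ'(t)² dt = (n−2)·∫₀^∞ t^{n−3}·ψ(t)² dt + γ²·(n−4)·∫₀^∞ t^{n−5}·ψ(t)² dt. -/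
open MeasureTheory Real Filter Topology in
lemma aux_bounds (f : ℝ → ℝ) (C δ a s : ℝ) (hδ : 0 < δ)
    (h0 : ∀ t ∈ Set.Ioc (0:ℝ) 1, |f t| ≤ C * t ^ (-a))
    (h1 : ∀ t : ℝ, 1 ≤ t → |f t| ≤ C * Real.exp (-δ * t)) :
    (∀ t ∈ Set.Ioc (0:ℝ) 1, ‖t ^ s * (f t)^2‖ ≤ C^2 * t ^ (s - 2*a)) ∧
    (∀ t : ℝ, 1 ≤ t → ‖t ^ s * (f t)^2‖ ≤ C^2 * (t ^ s * Real.exp (-(2*δ) * t))) := by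
  constructor
  · intro t ht
    have hp := ht.1
    have h := pow_le_pow_left₀ (abs_nonneg _) (h0 t ht) 2
    rw [sq_abs] at h
    rw [Real.norm_of_nonneg (by positivity)]
    have e : t ^ (s - 2*a) = t ^ s * (t ^ (-a))^2 := by
      rw [← Real.rpow_natCast, ← Real.rpow_mul hp.le, ← Real.rpow_add hp]
      congr 1; push_cast; ring
    rw [e]
    calc t ^ s * (f t)^2 ≤ t ^ s * (C * t ^ (-a))^2 := by gcongr
      _ = _ := by ring
  · intro t ht
    have hp : 0 < t := by linarith
    have h := pow_le_pow_left₀ (abs_nonneg _) (h1 t ht) 2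
    rw [sq_abs] at h
    rw [Real.norm_of_nonneg (by positivity)]
    have e : Real.exp (-(2*δ) * t) = (Real.exp (-δ * t))^2 := by
      rw [← Real.exp_nat_mul]; congr 1; push_cast; ring
    rw [e]
    calc t ^ s * (f t)^2 ≤ t ^ s * (C * Real.exp (-δ * t))^2 := by gcongr
      _ = _ := by ring

open MeasureTheory Real Filter Topology in
lemma aux_int_s7 (f : ℝ → ℝ) (hf : ContinuousOn f (Set.Ioi 0)) (C δ a s : ℝ) (hδ : 0 < δ)
    (ha : 0 ≤ a) (hs : -1 < s - 2*a)
    (h0 : ∀ t ∈ Set.Ioc (0:ℝ) 1, |f t| ≤ C * t ^ (-a))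
    (h1 : ∀ t : ℝ, 1 ≤ t → |f t| ≤ C * Real.exp (-δ * t)) :
    IntegrableOn (fun t => t ^ s * (f t)^2) (Set.Ioi 0) := by
  obtain ⟨b0, b1⟩ := aux_bounds f C δ a s hδ h0 h1
  have hc : ContinuousOn (fun t => t ^ s * (f t)^2) (Set.Ioi 0) :=
    (continuousOn_id.rpow_const fun x hx => Or.inl (ne_of_gt hx)).mul (hf.pow 2)
  rw [← Set.Ioc_union_Ioi_eq_Ioi (zero_le_one (α := ℝ))]
  refine IntegrableOn.union ?_ ?_
  · have i : IntegrableOn (fun t : ℝ => C^2 * t ^ (s - 2*a)) (Set.Ioc 0 1) := by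
      have := intervalIntegral.intervalIntegrable_rpow' (a := 0) (b := 1) hs
      rw [intervalIntegrable_iff_integrableOn_Ioc_of_le zero_le_one] at this
      exact this.const_mul _
    refine Integrable.mono' i
      ((hc.mono fun x hx => hx.1).aestronglyMeasurable measurableSet_Ioc) ?_
    filter_upwards [ae_restrict_mem measurableSet_Ioc] with t ht using b0 t ht
  · have i : IntegrableOn (fun t : ℝ => C^2 * (t ^ s * Real.exp (-(2*δ) * t))) (Set.Ioi 1) := by
      have := integrableOn_rpow_mul_exp_neg_mul_rpow (p := 1) (s := s) (b := 2*δ)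
        (by linarith) one_pos (by linarith)
      simp only [Real.rpow_one] at this
      exact (this.mono_set (Set.Ioi_subset_Ioi zero_le_one)).const_mul _
    refine Integrable.mono' i
      ((hc.mono (Set.Ioi_subset_Ioi zero_le_one)).aestronglyMeasurable measurableSet_Ioi) ?_
    filter_upwards [ae_restrict_mem measurableSet_Ioi] with t ht using b1 t (le_of_lt ht)

open MeasureTheory Real Filter Topology in
lemma aux_tendsto (f : ℝ → ℝ) (C δ a s : ℝ) (hδ : 0 < δ) (hs : 0 < s - 2*a)
    (h0 : ∀ t ∈ Set.Ioc (0:ℝ) 1, |f t| ≤ C * t ^ (-a))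
    (h1 : ∀ t : ℝ, 1 ≤ t → |f t| ≤ C * Real.exp (-δ * t)) :
    Tendsto (fun t => t ^ s * (f t)^2) (𝓝[>] 0) (𝓝 0) ∧
    Tendsto (fun t => t ^ s * (f t)^2) atTop (𝓝 0) := by
  obtain ⟨b0, b1⟩ := aux_bounds f C δ a s hδ h0 h1
  constructor
  · have l : Tendsto (fun t : ℝ => C^2 * t ^ (s - 2*a)) (𝓝[>] 0) (𝓝 0) := by
      have := (Real.continuousAt_rpow_const 0 (s - 2*a) (Or.inr hs.le)).tendsto
      rw [Real.zero_rpow hs.ne'] at this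
      simpa using (this.mono_left nhdsWithin_le_nhds).const_mul (C^2)
    refine squeeze_zero_norm' ?_ l
    filter_upwards [Ioc_mem_nhdsGT (zero_lt_one (α := ℝ))] with t ht using b0 t ht
  · have l := (tendsto_rpow_mul_exp_neg_mul_atTop_nhds_zero s (2*δ) (by linarith)).const_mul (C^2)
    rw [mul_zero] at l
    refine squeeze_zero_norm' ?_ l
    filter_upwards [eventually_ge_atTop 1] with t ht using b1 t ht


open MeasureTheory Real in
theorem stmt_7 (γ : ℝ) (hγ : γ ∈ Set.Ioo (0:ℝ) 1) (n : ℤ) (hn : 4 + 2*γ < (n:ℝ))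
    (ψ : ℝ → ℝ) (hψ : ContDiffOn ℝ 2 ψ (Set.Ioi 0))
    (hbessel : ∀ t : ℝ, 0 < t →
      t^2 * deriv (deriv ψ) t + t * deriv ψ t - (t^2 + γ^2) * ψ t = 0)
    (hdecay : ∃ C δ : ℝ, 0 < C ∧ 0 < δ ∧
      (∀ t ∈ Set.Ioc (0:ℝ) 1, |ψ t| ≤ C * t ^ (-γ) ∧ |deriv ψ t| ≤ C * t ^ (-γ-1)) ∧
      (∀ t : ℝ, 1 ≤ t → |ψ t| + |deriv ψ t| ≤ C * Real.exp (-δ * t))) :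
    ((n:ℝ)-4) * ∫ t in Set.Ioi (0:ℝ), t ^ ((n:ℝ)-3) * (deriv ψ t)^2 =
      ((n:ℝ)-2) * (∫ t in Set.Ioi (0:ℝ), t ^ ((n:ℝ)-3) * (ψ t)^2)
        + γ^2 * ((n:ℝ)-4) * ∫ t in Set.Ioi (0:ℝ), t ^ ((n:ℝ)-5) * (ψ t)^2 := by
  obtain ⟨C, δ, hC, hδ, h0, h1⟩ := hdecay
  obtain ⟨hγ0, hγ1⟩ := hγ
  have hop : IsOpen (Set.Ioi (0:ℝ)) := isOpen_Ioi
  have hd1 : ContDiffOn ℝ 1 (deriv ψ) (Set.Ioi 0) :=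
    ((contDiffOn_succ_iff_deriv_of_isOpen (n := 1) hop).1 hψ).2.2
  have D0 : ∀ t ∈ Set.Ioi (0:ℝ), HasDerivAt ψ (deriv ψ t) t := fun t ht =>
    ((hψ.differentiableOn (by norm_num)).differentiableAt (hop.mem_nhds ht)).hasDerivAt
  have D1 : ∀ t ∈ Set.Ioi (0:ℝ), HasDerivAt (deriv ψ) (deriv (deriv ψ) t) t := fun t ht =>
    ((hd1.differentiableOn (by norm_num)).differentiableAt (hop.mem_nhds ht)).hasDerivAt
  have p0 : ∀ t ∈ Set.Ioc (0:ℝ) 1, |ψ t| ≤ C * t ^ (-γ) := fun t ht => (h0 t ht).1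
  have q0 : ∀ t ∈ Set.Ioc (0:ℝ) 1, |deriv ψ t| ≤ C * t ^ (-(γ+1)) := fun t ht => by
    rw [neg_add']; exact (h0 t ht).2
  have p1 : ∀ t : ℝ, 1 ≤ t → |ψ t| ≤ C * Real.exp (-δ * t) := fun t ht => by
    linarith [h1 t ht, abs_nonneg (deriv ψ t)]
  have q1 : ∀ t : ℝ, 1 ≤ t → |deriv ψ t| ≤ C * Real.exp (-δ * t) := fun t ht => by
    linarith [h1 t ht, abs_nonneg (ψ t)]
  generalize (n:ℝ) = m at *
  have I1 := aux_int_s7 (deriv ψ) hd1.continuousOn C δ (γ+1) (m-3) hδ (by linarith) (by linarith) q0 q1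
  have I2 := aux_int_s7 ψ hψ.continuousOn C δ γ (m-3) hδ (by linarith) (by linarith) p0 p1
  have I3 := aux_int_s7 ψ hψ.continuousOn C δ γ (m-5) hδ (by linarith) (by linarith) p0 p1
  have T1 := aux_tendsto (deriv ψ) C δ (γ+1) (m-2) hδ (by linarith) q0 q1
  have T2 := aux_tendsto ψ C δ γ (m-2) hδ (by linarith) p0 p1
  have T3 := aux_tendsto ψ C δ γ (m-4) hδ (by linarith) p0 p1
  let F : ℝ → ℝ := fun t => t ^ (m-2) * (deriv ψ t)^2 - t ^ (m-2) * (ψ t)^2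
    - γ^2 * (t ^ (m-4) * (ψ t)^2)
  let G : ℝ → ℝ := fun t => (m-4) * (t ^ (m-3) * (deriv ψ t)^2) - (m-2) * (t ^ (m-3) * (ψ t)^2)
    - γ^2 * (m-4) * (t ^ (m-5) * (ψ t)^2)
  have hG : IntegrableOn G (Set.Ioi 0) :=
    ((I1.const_mul _).sub (I2.const_mul _)).sub (I3.const_mul _)
  have hF : ∀ t ∈ Set.Ioi (0:ℝ), HasDerivAt F (G t) t := by
    intro t ht
    have ht' : 0 < t := ht
    have r2 : HasDerivAt (fun x : ℝ => x ^ (m-2)) _ t :=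
      Real.hasDerivAt_rpow_const (Or.inl ht'.ne')
    have r4 : HasDerivAt (fun x : ℝ => x ^ (m-4)) _ t :=
      Real.hasDerivAt_rpow_const (Or.inl ht'.ne')
    have H := ((r2.mul ((D1 t ht).pow 2)).sub (r2.mul ((D0 t ht).pow 2))).sub
      ((r4.mul ((D0 t ht).pow 2)).const_mul (γ^2))
    refine H.congr_deriv ?_
    have e (k : ℕ) : t ^ (m - 5 + k) = t ^ (m-5) * t ^ k := Real.rpow_add_natCast ht'.ne' _ _
    have e1 : t ^ (m-4) = t ^ (m-5) * t := by
      rw [← Real.rpow_add_one ht'.ne']; congr 1; ring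
    have e2 : t ^ (m-3) = t ^ (m-5) * t^2 := by
      rw [← e]; congr 1; push_cast; ring
    have e3 : t ^ (m-2) = t ^ (m-5) * t^3 := by
      rw [← e]; congr 1; push_cast; ring
    simp only [G, show m - 2 - 1 = m - 3 by ring, show m - 4 - 1 = m - 5 by ring, e1, e2, e3,
      Pi.pow_apply]
    have hb := hbessel t ht'
    simp only [Nat.cast_ofNat, Nat.add_one_sub_one, pow_one]
    linear_combination 2 * t ^ (m-5) * t * deriv ψ t * hb
  have z0 : Filter.Tendsto F (nhdsWithin 0 (Set.Ioi 0)) (nhds 0) := by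
    simpa using (T1.1.sub T2.1).sub (T3.1.const_mul (γ^2))
  have z1 : Filter.Tendsto F Filter.atTop (nhds 0) := by
    simpa using (T1.2.sub T2.2).sub (T3.2.const_mul (γ^2))
  have key := integral_Ioi_deriv_mul_eq_sub (a := 0) (u := F) (u' := G) (v := fun _ => (1:ℝ))
    (v' := fun _ => 0) (a' := 0) (b' := 0) hF (fun x _ => hasDerivAt_const x 1)
    (by simpa [Pi.mul_def, Pi.add_def] using hG) (by simpa [Pi.mul_def] using z0)
    (by simpa [Pi.mul_def] using z1)
  simp only [mul_one, mul_zero, add_zero, sub_zero] at key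
  have s : ∫ t in Set.Ioi (0:ℝ), G t = (m-4) * (∫ t in Set.Ioi (0:ℝ), t ^ (m-3) * (deriv ψ t)^2)
      - (m-2) * (∫ t in Set.Ioi (0:ℝ), t ^ (m-3) * (ψ t)^2)
      - γ^2 * (m-4) * ∫ t in Set.Ioi (0:ℝ), t ^ (m-5) * (ψ t)^2 := by
    simp only [G]
    rw [integral_sub, integral_sub (I1.const_mul _) (I2.const_mul _), integral_const_mul,
      integral_const_mul, integral_const_mul]
    · exact (I1.const_mul _).sub (I2.const_mul _)
    · exact I3.const_mul _
  linarith
end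

section
/- With U the Poisson extension of w(x) = (1 + |x|²)^{−(n−2γ)/2} as defined in the context, one has ∫_{ℝ^{n+1}_+} y^{a+2}·x₁·x₂·(∂₁U)·(∂₂U) dx dy = [(5n³ − 10n² − (a² − 2a + 25)n − 2a² + 4a + 30) / (20·n·(n+2)·(n−3))]·∫_{ℝ^{n+1}_+} y^{a+2}·U² dx dy. -/
section
open MeasureTheory Real

namespace Bub

noncomputable abbrev mo : Measure ℝ := volume.restrict (Set.Ioi 0)

lemma mo_congr {f g : ℝ → ENNReal} (h : ∀ t, 0 < t → f t = g t) :
    ∫⁻ t, f t ∂mo = ∫⁻ t, g t ∂mo :=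
  setLIntegral_congr_fun measurableSet_Ioi (fun t ht => h t ht)

lemma mo_scale {c : ℝ} (hc : 0 < c) (f : ℝ → ENNReal) :
    ∫⁻ t, f t ∂mo = ∫⁻ t, ENNReal.ofReal c * f (c * t) ∂mo := by
  have h := lintegral_image_eq_lintegral_abs_deriv_mul (s := Set.Ioi (0:ℝ)) (f := fun t => c * t)
    (f' := fun _ => c) measurableSet_Ioi
    (fun x _ => by simpa using ((hasDerivAt_id x).const_mul c).hasDerivWithinAt)
    (fun x _ y _ hxy => by simpa [hc.ne'] using hxy) f
  have himg : (fun t => c * t) '' Set.Ioi (0:ℝ) = Set.Ioi 0 := by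
    ext x
    constructor
    · rintro ⟨t, ht, rfl⟩
      exact mul_pos hc ht
    · intro hx
      exact ⟨x / c, div_pos hx hc, by field_simp⟩
  rw [himg, abs_of_pos hc] at h
  exact h

lemma mo_inv (f : ℝ → ENNReal) :
    ∫⁻ t, f t ∂mo = ∫⁻ t, ENNReal.ofReal (t ^ (-2:ℝ)) * f (t⁻¹) ∂mo := by
  have h := lintegral_image_eq_lintegral_abs_deriv_mul (s := Set.Ioi (0:ℝ)) (f := fun t => t⁻¹)
    (f' := fun t => -(t^2)⁻¹) measurableSet_Ioi
    (fun x hx => (hasDerivAt_inv (ne_of_gt hx)).hasDerivWithinAt)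
    (fun x _ y _ hxy => by simpa using hxy) f
  have himg : (fun t => t⁻¹) '' Set.Ioi (0:ℝ) = Set.Ioi 0 := by
    ext x
    constructor
    · rintro ⟨t, ht, rfl⟩
      exact Set.mem_Ioi.2 (inv_pos.mpr (Set.mem_Ioi.1 ht))
    · intro hx
      exact ⟨x⁻¹, Set.mem_Ioi.2 (inv_pos.mpr (Set.mem_Ioi.1 hx)), by simp⟩
  rw [himg] at h
  rw [h]
  refine mo_congr fun t ht => ?_
  rw [abs_neg, abs_of_pos (by positivity), rpow_neg ht.le]
  norm_num

lemma mo_gamma {s r : ℝ} (hs : 0 < s) (hr : 0 < r) :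
    ∫⁻ t, ENNReal.ofReal (t ^ (s-1) * exp (-(r * t))) ∂mo = ENNReal.ofReal (Gamma s * r ^ (-s)) := by
  have hi : IntegrableOn (fun t : ℝ => t ^ (s-1) * exp (-(r * t))) (Set.Ioi 0) := by
    have := integrableOn_rpow_mul_exp_neg_mul_rpow (p := 1) (s := s - 1) (b := r)
      (by linarith) one_pos hr
    simpa using this
  rw [← ofReal_integral_eq_lintegral_ofReal hi]
  · have := integral_rpow_mul_exp_neg_mul_rpow (p := 1) (q := s - 1) (b := r)
      one_pos (by linarith) hr
    simp only [rpow_one, neg_mul, sub_add_cancel, div_one, mul_one] at this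
    rw [this, mul_comm]
  · filter_upwards [ae_restrict_mem measurableSet_Ioi] with t ht
    have : (0:ℝ) < t := ht
    positivity

lemma mo_gauss {q b : ℝ} (hq : -1 < q) (hb : 0 < b) :
    ∫⁻ t, ENNReal.ofReal (t ^ q * exp (-(b * t^2))) ∂mo =
      ENNReal.ofReal (b ^ (-((q+1)/2)) * (1/2) * Gamma ((q+1)/2)) := by
  have hi : IntegrableOn (fun t : ℝ => t ^ q * exp (-(b * t^2))) (Set.Ioi 0) := by
    have := integrableOn_rpow_mul_exp_neg_mul_rpow (p := 2) (s := q) (b := b)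
      hq two_pos hb
    simpa using this
  rw [← ofReal_integral_eq_lintegral_ofReal hi]
  · have := integral_rpow_mul_exp_neg_mul_rpow (p := 2) (q := q) (b := b)
      two_pos hq hb
    simp only [rpow_two, neg_mul] at this
    rw [this, neg_div]
  · filter_upwards [ae_restrict_mem measurableSet_Ioi] with t ht
    have : (0:ℝ) < t := ht
    positivity

lemma mo_invgamma {s r : ℝ} (hs : 0 < s) (hr : 0 < r) :
    ∫⁻ t, ENNReal.ofReal (t ^ (-s-1) * exp (-(r / t))) ∂mo = ENNReal.ofReal (Gamma s * r ^ (-s)) := by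
  rw [mo_inv, ← mo_gamma hs hr]
  refine mo_congr fun t ht => ?_
  rw [← ENNReal.ofReal_mul (by positivity), inv_rpow ht.le, ← rpow_neg ht.le, ← mul_assoc,
    ← rpow_add ht, div_inv_eq_mul]
  congr 3
  ring

noncomputable def B (p q : ℝ) : ℝ := Gamma p * Gamma q / Gamma (p + q)

lemma mo_beta {p q : ℝ} (hp : 0 < p) (hq : 0 < q) :
    ∫⁻ u, ENNReal.ofReal (u ^ (p-1) * (1 + u) ^ (-(p+q))) ∂mo = ENNReal.ofReal (B p q) := by
  have hG : 0 < Gamma (p+q) := Gamma_pos_of_pos (by linarith)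
  have h1 : ∫⁻ u, ENNReal.ofReal (u ^ (p-1) * (1 + u) ^ (-(p+q))) ∂mo =
     ∫⁻ u, ENNReal.ofReal (Gamma (p+q))⁻¹ *
      ∫⁻ v, ENNReal.ofReal (u ^ (p-1) * v ^ (p+q-1) * exp (-((1+u) * v))) ∂mo ∂mo := by
    refine mo_congr fun u hu => ?_
    have : ∫⁻ v, ENNReal.ofReal (u ^ (p-1) * v ^ (p+q-1) * exp (-((1+u) * v))) ∂mo
      = ∫⁻ v, ENNReal.ofReal (u ^ (p-1)) * ENNReal.ofReal (v ^ (p+q-1) * exp (-((1+u) * v))) ∂mo := by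
      refine mo_congr fun v hv => ?_
      rw [← ENNReal.ofReal_mul (by positivity), mul_assoc]
    rw [this, lintegral_const_mul _ (by fun_prop), mo_gamma (by linarith) (by linarith),
      ← ENNReal.ofReal_mul (by positivity), ← ENNReal.ofReal_mul (by positivity)]
    congr 1
    field_simp
  rw [h1, lintegral_const_mul' _ _ ENNReal.ofReal_ne_top, lintegral_lintegral_swap (by fun_prop)]
  have h2 : ∫⁻ v, ∫⁻ u, ENNReal.ofReal (u ^ (p-1) * v ^ (p+q-1) * exp (-((1+u) * v))) ∂mo ∂mo
     = ∫⁻ v, ENNReal.ofReal (Gamma p) * ENNReal.ofReal (v ^ (q-1) * exp (-(1 * v))) ∂mo := by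
    refine mo_congr fun v hv => ?_
    have : ∫⁻ u, ENNReal.ofReal (u ^ (p-1) * v ^ (p+q-1) * exp (-((1+u) * v))) ∂mo
      = ∫⁻ u, ENNReal.ofReal (v ^ (p+q-1) * exp (-v)) * ENNReal.ofReal (u ^ (p-1) * exp (-(v * u))) ∂mo := by
      refine mo_congr fun u hu => ?_
      rw [← ENNReal.ofReal_mul (by positivity)]
      congr 1
      rw [show -((1+u)*v) = -v + -(v*u) by ring, exp_add]
      ring
    have hp' := Gamma_pos_of_pos hp
    rw [this, lintegral_const_mul _ (by fun_prop), mo_gamma hp hv,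
      ← ENNReal.ofReal_mul (by positivity), ← ENNReal.ofReal_mul (by positivity)]
    congr 1
    rw [show q - 1 = (p+q-1) + (-p) by ring, rpow_add hv]
    ring_nf
  have hp' := Gamma_pos_of_pos hp
  have hq' := Gamma_pos_of_pos hq
  rw [h2, lintegral_const_mul _ (by fun_prop), mo_gamma hq one_pos,
    ← ENNReal.ofReal_mul (by positivity), ← ENNReal.ofReal_mul (by positivity)]
  congr 1
  rw [B, one_rpow]
  ring

lemma mo_liouville {p q : ℝ} (hp : 0 < p) (hq : 0 < q) (g : ℝ → ENNReal) (hg : Measurable g) :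
    ∫⁻ s, ∫⁻ t, ENNReal.ofReal (s ^ (p-1) * t ^ (q-1)) * g (s + t) ∂mo ∂mo =
      ENNReal.ofReal (B p q) * ∫⁻ r, ENNReal.ofReal (r ^ (p+q-1)) * g r ∂mo := by
  have h1 : ∫⁻ s, ∫⁻ t, ENNReal.ofReal (s ^ (p-1) * t ^ (q-1)) * g (s + t) ∂mo ∂mo =
    ∫⁻ s, ∫⁻ u, ENNReal.ofReal (s ^ (p+q-1) * u ^ (q-1)) * g ((1+u) * s) ∂mo ∂mo := by
    refine mo_congr fun s hs => ?_
    rw [mo_scale hs]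
    refine mo_congr fun u hu => ?_
    rw [← mul_assoc, ← ENNReal.ofReal_mul hs.le, mul_rpow hs.le hu.le]
    congr 2
    · rw [show p+q-1 = 1 + (p-1) + (q-1) by ring, rpow_add hs, rpow_add hs, rpow_one]
      ring
    · ring
  rw [h1, lintegral_lintegral_swap (by fun_prop)]
  have h2 : ∫⁻ u, ∫⁻ s, ENNReal.ofReal (s ^ (p+q-1) * u ^ (q-1)) * g ((1+u) * s) ∂mo ∂mo =
     ∫⁻ u, ENNReal.ofReal (u ^ (q-1) * (1 + u) ^ (-(q+p))) *
       ∫⁻ r, ENNReal.ofReal (r ^ (p+q-1)) * g r ∂mo ∂mo := by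
    refine mo_congr fun u hu => ?_
    have hu1 : 0 < 1 + u := by linarith
    rw [mo_scale hu1 (fun r => ENNReal.ofReal (r ^ (p+q-1)) * g r),
      ← lintegral_const_mul' _ _ ENNReal.ofReal_ne_top]
    refine mo_congr fun s hs => ?_
    rw [← mul_assoc, ← mul_assoc, ← ENNReal.ofReal_mul (by positivity),
      ← ENNReal.ofReal_mul (by positivity), mul_rpow hu1.le hs.le]
    congr 2
    have : (1+u) ^ (-(q+p)) * ((1+u) * (1+u) ^ (p+q-1)) = 1 := by
      rw [← rpow_one_add' hu1.le (by linarith), ← rpow_add hu1, 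
        show -(q+p) + (1 + (p+q-1)) = 0 by ring, rpow_zero]
    calc s ^ (p+q-1) * u ^ (q-1) = s ^ (p+q-1) * u ^ (q-1) * ((1+u) ^ (-(q+p)) * ((1+u) * (1+u) ^ (p+q-1))) := by rw [this, mul_one]
      _ = _ := by ring
  rw [h2, lintegral_mul_const _ (by fun_prop), mo_beta hq hp]
  congr 2
  rw [B, B, add_comm q p, mul_comm (Gamma q)]

end Bub

end

section
open MeasureTheory Real

namespace Bub

lemma B_pos {p q : ℝ} (hp : 0 < p) (hq : 0 < q) : 0 < B p q := by
  have h1 := Gamma_pos_of_pos hp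
  have h2 := Gamma_pos_of_pos hq
  have h3 := Gamma_pos_of_pos (add_pos hp hq)
  unfold B
  positivity

lemma mo_beta_scaled {k e A : ℝ} (hk : 0 < k) (he : 0 < e) (hA : 0 < A) :
    ∫⁻ r, ENNReal.ofReal (r ^ (k-1) * (A + r) ^ (-(k+e))) ∂mo =
      ENNReal.ofReal (B k e * A ^ (-e)) := by
  have hB := B_pos hk he
  rw [mo_scale hA, mul_comm (B k e), ENNReal.ofReal_mul (by positivity), ← mo_beta hk he,
    ← lintegral_const_mul' _ _ ENNReal.ofReal_ne_top]
  refine mo_congr fun u hu => ?_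
  rw [← ENNReal.ofReal_mul (by positivity), ← ENNReal.ofReal_mul (by positivity),
    mul_rpow hA.le hu.le, show A + A * u = A * (1+u) by ring, mul_rpow hA.le (by linarith)]
  congr 1
  rw [show -e = 1 + (k-1) + (-(k+e)) by ring, rpow_add hA, rpow_add hA, rpow_one]
  ring

lemma mo_inner {q q' c d A : ℝ} (hq : 0 < q) (hq' : 0 < q') (hk : 0 < q + q' - c)
    (he : 0 < d - (q + q' - c)) (hA : 0 < A) :
    ∫⁻ β, ∫⁻ β', ENNReal.ofReal (β ^ (q-1) * β' ^ (q'-1) * (β + β') ^ (-c) *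
      (A + (β + β')) ^ (-d)) ∂mo ∂mo =
     ENNReal.ofReal (B q q' * B (q + q' - c) (d - (q + q' - c)) * A ^ (-(d - (q+q'-c)))) := by
  have h := mo_liouville hq hq' (fun r => ENNReal.ofReal (r ^ (-c) * (A + r) ^ (-d))) (by fun_prop)
  have h1 : ∫⁻ β, ∫⁻ β', ENNReal.ofReal (β ^ (q-1) * β' ^ (q'-1) * (β + β') ^ (-c) *
      (A + (β + β')) ^ (-d)) ∂mo ∂mo = ∫⁻ s, ∫⁻ t, ENNReal.ofReal (s ^ (q-1) * t ^ (q'-1)) *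
      ENNReal.ofReal ((s+t) ^ (-c) * (A + (s+t)) ^ (-d)) ∂mo ∂mo := by
    refine mo_congr fun s hs => mo_congr fun t ht => ?_
    rw [← ENNReal.ofReal_mul (by positivity)]
    congr 1
    ring
  have hB := B_pos hq hq'
  rw [h1, h, mul_assoc, ENNReal.ofReal_mul hB.le, ← mo_beta_scaled hk he hA]
  congr 1
  refine mo_congr fun r hr => ?_
  rw [← ENNReal.ofReal_mul (by positivity), ← mul_assoc, ← rpow_add hr]
  congr 3
  · ring
  · ring

lemma mo_outer {p p' e : ℝ} (h1 : 0 < e - p) (h2 : 0 < e - p') (h3 : 0 < e - p - p') :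
    ∫⁻ α, ∫⁻ α', ENNReal.ofReal (α ^ (p-1) * α' ^ (p'-1) * exp (-(1/α)) * exp (-(1/α')) *
      (α + α') ^ (-e)) ∂mo ∂mo =
     ENNReal.ofReal (B (e-p) (e-p') * Gamma (e-p-p')) := by
  have hB := B_pos h1 h2
  have hG := Gamma_pos_of_pos h3
  have h := mo_liouville h1 h2 (fun r => ENNReal.ofReal (r ^ (-e) * exp (-(1 * r)))) (by fun_prop)
  have hg := mo_gamma h3 one_pos
  rw [one_rpow, mul_one] at hg
  rw [ENNReal.ofReal_mul hB.le, ← hg]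
  convert! h using 1
  · rw [mo_inv]
    refine mo_congr fun s hs => ?_
    rw [mo_inv, ← lintegral_const_mul' _ _ ENNReal.ofReal_ne_top]
    refine mo_congr fun t ht => ?_
    rw [← ENNReal.ofReal_mul (by positivity), ← ENNReal.ofReal_mul (by positivity),
      ← ENNReal.ofReal_mul (by positivity)]
    congr 1
    rw [show s⁻¹ + t⁻¹ = s⁻¹ * t⁻¹ * (s + t) by field_simp; ring,
      mul_rpow (by positivity) (by positivity), mul_rpow (by positivity) (by positivity)]
    simp only [inv_rpow hs.le, inv_rpow ht.le, ← rpow_neg hs.le, ← rpow_neg ht.le, one_div, inv_inv, neg_neg, one_mul]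
    rw [show e - p - 1 = -2 + -(p-1) + e by ring, show e - p' - 1 = -2 + -(p'-1) + e by ring,
      rpow_add hs, rpow_add hs, rpow_add ht, rpow_add ht, neg_add, exp_add]
    ring
  · congr 1
    refine mo_congr fun r hr => ?_
    rw [← ENNReal.ofReal_mul (by positivity), ← mul_assoc, ← rpow_add hr]
    congr 3
    ring

noncomputable def I (p p' q q' c d : ℝ) : ENNReal :=
  ∫⁻ α, ∫⁻ α', ∫⁻ β, ∫⁻ β', ENNReal.ofReal ((α ^ (p-1) * α' ^ (p'-1) * exp (-(1/α)) * exp (-(1/α'))) *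
    (β ^ (q-1) * β' ^ (q'-1) * (β + β') ^ (-c) *
      ((α + α') + (β + β')) ^ (-d))) ∂mo ∂mo ∂mo ∂mo

lemma mo_I {p p' q q' c d k e : ℝ} (hkd : q + q' - c = k) (hed : d - k = e)
    (hq : 0 < q) (hq' : 0 < q') (hk : 0 < k)
    (he : 0 < e) (h1 : 0 < e - p) (h2 : 0 < e - p') (h3 : 0 < e - p - p') :
    I p p' q q' c d = ENNReal.ofReal (B q q' * B k e * (B (e-p) (e-p') * Gamma (e-p-p'))) := by
  subst hkd hed
  have hB1 := B_pos hq hq'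
  have hB2 := B_pos hk he
  rw [ENNReal.ofReal_mul (by positivity), ← mo_outer h1 h2 h3, I,
    ← lintegral_const_mul' _ _ ENNReal.ofReal_ne_top]
  refine mo_congr fun α hα => ?_
  rw [← lintegral_const_mul' _ _ ENNReal.ofReal_ne_top]
  refine mo_congr fun α' hα' => ?_
  have hA : 0 < α + α' := by linarith
  simp_rw [ENNReal.ofReal_mul (show 0 ≤ α ^ (p-1) * α' ^ (p'-1) * exp (-(1/α)) * exp (-(1/α')) by positivity),
    lintegral_const_mul' _ _ ENNReal.ofReal_ne_top]
  rw [mo_inner hq hq' hk he hA, ← ENNReal.ofReal_mul (by positivity), ← ENNReal.ofReal_mul (by positivity), ← ENNReal.ofReal_mul (by positivity)]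
  congr 1
  ring

lemma final_ratio {γ n : ℝ} (h0 : 0 < γ) (h1 : γ < 1) (hn : 4 + 2 * γ < n) :
   (I (γ+1) (γ+1) 2 2 (2+γ) (n/2+2) + I (γ+1) γ 2 3 (2+γ) (n/2+2) + I γ (γ+1) 3 2 (2+γ) (n/2+2)
     + I γ γ 3 3 (2+γ) (n/2+2)) = 
   ENNReal.ofReal ((5*n^3 - 10*n^2 - ((1-2*γ)^2 - 2*(1-2*γ) + 25)*n - 2*(1-2*γ)^2 + 4*(1-2*γ) + 30)
        / (20*n*(n+2)*(n-3))) * I γ γ 2 2 (2+γ) (n/2) ∧ I γ γ 2 2 (2+γ) (n/2) ≠ ⊤ := by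
  have e1 : I (γ+1) (γ+1) 2 2 (2+γ) (n/2+2) = _ := mo_I (k := 2 - γ) (e := n/2+γ-2+2) (by ring) (by ring)
    (by linarith) (by linarith) (by linarith) (by linarith) (by linarith) (by linarith) (by linarith)
  have e2 : I (γ+1) γ 2 3 (2+γ) (n/2+2) = _ := mo_I (k := 2 - γ+1) (e := n/2+γ-2+1) (by ring) (by ring)
    (by linarith) (by linarith) (by linarith) (by linarith) (by linarith) (by linarith) (by linarith)
  have e3 : I γ (γ+1) 3 2 (2+γ) (n/2+2) = _ := mo_I (k := 2 - γ+1) (e := n/2+γ-2+1) (by ring) (by ring)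
    (by linarith) (by linarith) (by linarith) (by linarith) (by linarith) (by linarith) (by linarith)
  have e4 : I γ γ 3 3 (2+γ) (n/2+2) = _ := mo_I (k := 2 - γ+2) (e := n/2+γ-2) (by ring) (by ring)
    (by linarith) (by linarith) (by linarith) (by linarith) (by linarith) (by linarith) (by linarith)
  have e5 : I γ γ 2 2 (2+γ) (n/2) = _ := mo_I (k := 2 - γ) (e := n/2+γ-2) (by ring) (by ring)
    (by linarith) (by linarith) (by linarith) (by linarith) (by linarith) (by linarith) (by linarith)
  refine ⟨?_, by rw [e5]; exact ENNReal.ofReal_ne_top⟩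
  rw [e1, e2, e3, e4, e5]
  have add1 : ∀ s : ℝ, 0 < s → Gamma (s+1) = s * Gamma s := fun s hs => Gamma_add_one hs.ne'
  have add2 : ∀ s : ℝ, 0 < s → Gamma (s+2) = (s+1) * (s * Gamma s) := fun s hs => by
    rw [show s + 2 = (s+1)+1 by ring, Gamma_add_one (by linarith), Gamma_add_one hs.ne']
  have posB : ∀ a b : ℝ, 0 < a → 0 < b → 0 ≤ B a b := fun a b ha hb => (B_pos ha hb).le
  have posG : ∀ a : ℝ, 0 < a → 0 ≤ Gamma a := fun a ha => (Gamma_pos_of_pos ha).le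
  have E : ∀ x y z t : ℝ, x = n/2 - 2 - γ → 0 < y → 0 < z → 0 < t → 0 ≤ t := by intros; linarith
  rw [← ENNReal.ofReal_add, ← ENNReal.ofReal_add, ← ENNReal.ofReal_add, ← ENNReal.ofReal_mul']
  rotate_left
  iterate 7
    · first
      | (refine mul_nonneg (mul_nonneg (posB _ _ ?_ ?_) (posB _ _ ?_ ?_)) (mul_nonneg (posB _ _ ?_ ?_) (posG _ ?_)) <;> linarith)
      | (repeat' apply add_nonneg) <;> (refine mul_nonneg (mul_nonneg (posB _ _ ?_ ?_) (posB _ _ ?_ ?_)) (mul_nonneg (posB _ _ ?_ ?_) (posG _ ?_)) <;> linarith)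
  congr 1
  have g1 : ∀ x, x = n/2 - 2 - γ → Gamma x = Gamma (n/2-2-γ) := by rintro x rfl; rfl
  rw [show n/2+γ-2+2-(γ+1)-(γ+1) = n/2-2-γ by ring, show n/2+γ-2+1-(γ+1)-γ = n/2-2-γ by ring,
    show n/2+γ-2+1-γ-(γ+1) = n/2-2-γ by ring, show n/2+γ-2-γ-γ = n/2-2-γ by ring,
    show n/2+γ-2+2-(γ+1) = (n/2-2)+1 by ring, show n/2+γ-2+1-(γ+1) = n/2-2 by ring,
    show n/2+γ-2+1-γ = (n/2-2)+1 by ring, show n/2+γ-2-γ = n/2-2 by ring]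
  unfold B
  rw [show (n/2-2+1 + (n/2-2+1)) = (n-4)+2 by ring, show (n/2-2 + (n/2-2+1)) = (n-4)+1 by ring,
   show (n/2-2+1 + (n/2-2)) = (n-4)+1 by ring, show n/2-2 + (n/2-2) = n-4 by ring,
   show 2 - γ + (n/2+γ-2+2) = n/2+2 by ring, show 2 - γ + 1 + (n/2+γ-2+1) = n/2+2 by ring,
   show 2 - γ + 2 + (n/2+γ-2) = n/2+2 by ring, show 2 - γ + (n/2+γ-2) = n/2 by ring,
   add1 (n/2-2) (by linarith), add2 (n-4) (by linarith), add1 (n-4) (by linarith),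
   add2 (2-γ) (by linarith), add1 (2-γ) (by linarith), add2 (n/2+γ-2) (by linarith),
   add1 (n/2+γ-2) (by linarith), add2 (n/2) (by linarith)]
  have f2 : Gamma (2:ℝ) = 1 := Gamma_two
  have f3 : Gamma (3:ℝ) = 2 := by
    rw [show (3:ℝ) = 1 + 2 by norm_num, add2 1 one_pos, Gamma_one]; norm_num
  have f4 : Gamma (4:ℝ) = 6 := by
    rw [show (4:ℝ) = 2 + 2 by norm_num, add2 2 two_pos, Gamma_two]; norm_num
  have f5 : Gamma (5:ℝ) = 24 := by
    rw [show (5:ℝ) = 3 + 2 by norm_num, add2 3 three_pos, f3]; norm_num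
  have f6 : Gamma (6:ℝ) = 120 := by
    rw [show (6:ℝ) = 4 + 2 by norm_num, add2 4 four_pos, f4]; norm_num
  norm_num only [f2, f3, f4, f5, f6]
  have p1 := Gamma_pos_of_pos (show 0 < n - 4 by linarith)
  have p2 := Gamma_pos_of_pos (show 0 < n / 2 by linarith)
  generalize Gamma (n-4) = G1 at *
  generalize Gamma (n/2) = G2 at *
  generalize Gamma (2-γ) = G3 at *
  generalize Gamma (n/2+γ-2) = G4 at *
  generalize Gamma (n/2-2) = G5 at *
  generalize Gamma (n/2-2-γ) = G6 at *
  have q1 : n ≠ 0 := by linarith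
  have q2 : n + 2 ≠ 0 := by linarith
  have q3 : n - 3 ≠ 0 := by linarith
  have q4 : n - 4 ≠ 0 := by linarith
  have q5 : n/2 + 1 ≠ 0 := by linarith
  have q6 : n-4+1 = n - 3 := by ring
  rw [q6]
  rw [show n/2+1 = (n+2)/2 by ring]
  field_simp
  ring

end Bub

end

section
open MeasureTheory Real

namespace Bub

lemma int_sq_gauss {p : ℝ} (hp : 0 < p) :
    ∫ t : ℝ, t^2 * exp (-(p * t^2)) = (1/(2*p)) * (π/p)^(1/2:ℝ) := by
  have h := integral_comp_abs (f := fun t : ℝ => t^2 * exp (-(p * t^2)))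
  simp only [sq_abs] at h
  have h2 := integral_rpow_mul_exp_neg_mul_rpow (p := 2) (q := 2) (b := p)
      two_pos (by norm_num) hp
  simp only [rpow_two, neg_mul] at h2
  rw [h, h2]
  have : Gamma ((2+1)/2:ℝ) = (1/2) * π ^ (1/2:ℝ) := by
    rw [show ((2+1)/2:ℝ) = 1/2 + 1 by norm_num, Gamma_add_one (by norm_num), Gamma_one_half_eq, sqrt_eq_rpow]
  rw [this, div_rpow pi_pos.le hp.le, show (-(2+1)/2:ℝ) = -1 + -(1/2) by norm_num, rpow_add hp,
    rpow_neg hp.le, rpow_neg hp.le, rpow_one]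
  field_simp

lemma gauss_gen {n : ℕ} (S : Finset (Fin n)) {p : ℝ} (hp : 0 < p) :
    ∫⁻ x : EuclideanSpace ℝ (Fin n), ENNReal.ofReal ((∏ k ∈ S, (x k)^2) * exp (-(p * ‖x‖^2))) =
      ENNReal.ofReal ((1/(2*p))^(S.card) * (π/p)^((n:ℝ)/2)) := by
  classical
  let f : Fin n → ℝ → ℝ := fun k t => (if k ∈ S then t^2 else 1) * exp (-(p * t^2))
  have hfi : ∀ k, Integrable (f k) := by
    intro k
    by_cases hk : k ∈ S
    · simp only [f, hk, if_true]
      have := integrable_rpow_mul_exp_neg_mul_sq hp (s := 2) (by norm_num)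
      simpa using this
    · simp only [f, hk, if_false, one_mul]
      have := integrable_exp_neg_mul_sq hp
      simpa using this
  have hval : ∀ k, ∫ t, f k t = (if k ∈ S then (1/(2*p)) else 1) * (π/p)^(1/2:ℝ) := by
    intro k
    by_cases hk : k ∈ S
    · simp only [f, hk, if_true, int_sq_gauss hp]
    · simp only [f, hk, if_false, one_mul]
      have := integral_gaussian p
      rw [sqrt_eq_rpow] at this
      simpa using this
  have hfun : ∀ x : EuclideanSpace ℝ (Fin n), (∏ k ∈ S, (x k)^2) * exp (-(p * ‖x‖^2)) =
      ∏ k, f k (x k) := by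
    intro x
    simp only [f]
    rw [Finset.prod_mul_distrib, Finset.prod_ite_mem, Finset.univ_inter, ← exp_sum,
      EuclideanSpace.real_norm_sq_eq, Finset.mul_sum, Finset.sum_neg_distrib]
  simp_rw [hfun]
  have hmp := EuclideanSpace.volume_preserving_symm_measurableEquiv_toLp (Fin n)
  have h1 : ∫⁻ x : EuclideanSpace ℝ (Fin n), ENNReal.ofReal (∏ k, f k (x k)) =
     ∫⁻ x : Fin n → ℝ, ENNReal.ofReal (∏ k, f k (x k)) := by
    rw [← hmp.lintegral_comp_emb (MeasurableEquiv.measurableEmbedding _)]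
    rfl
  have hI : Integrable (fun x : Fin n → ℝ => ∏ k, f k (x k)) volume := Integrable.fintype_prod hfi
  rw [h1, ← ofReal_integral_eq_lintegral_ofReal hI]
  · rw [integral_fintype_prod_volume_eq_prod]
    simp_rw [hval]
    rw [Finset.prod_mul_distrib, Finset.prod_ite_mem, Finset.univ_inter, Finset.prod_const, Finset.prod_const,
      Finset.card_univ, Fintype.card_fin, ← rpow_natCast ((π/p)^(1/2:ℝ)), ← rpow_mul (by positivity)]
    congr 3
    ring
  · refine Filter.Eventually.of_forall fun x => ?_
    refine Finset.prod_nonneg fun k _ => ?_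
    simp only [f]
    split_ifs <;> positivity

lemma gauss0 {n : ℕ} {p : ℝ} (hp : 0 < p) :
    ∫⁻ x : EuclideanSpace ℝ (Fin n), ENNReal.ofReal (exp (-(p * ‖x‖^2))) =
      ENNReal.ofReal ((π/p)^((n:ℝ)/2)) := by
  simpa using gauss_gen (n := n) ∅ hp

lemma gauss2 {n : ℕ} {i j : Fin n} (hij : i ≠ j) {p : ℝ} (hp : 0 < p) :
    ∫⁻ x : EuclideanSpace ℝ (Fin n), ENNReal.ofReal ((x i)^2 * (x j)^2 * exp (-(p * ‖x‖^2))) =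
      ENNReal.ofReal ((1/(2*p))^2 * (π/p)^((n:ℝ)/2)) := by
  simpa [Finset.prod_pair hij, Finset.card_pair hij] using gauss_gen (n := n) {i, j} hp

lemma gauss_conv {n : ℕ} (x : EuclideanSpace ℝ (Fin n)) {α β : ℝ} (hα : 0 < α) (hβ : 0 < β) :
    ∫⁻ ξ : EuclideanSpace ℝ (Fin n), ENNReal.ofReal (exp (-(‖x - ξ‖^2 / β)) * exp (-(‖ξ‖^2 / α))) =
      ENNReal.ofReal ((π * (α * β / (α + β)))^((n:ℝ)/2) * exp (-(‖x‖^2 / (α+β)))) := by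
  have hp : 0 < 1/α + 1/β := by positivity
  have key : ∀ ξ : EuclideanSpace ℝ (Fin n), exp (-(‖x - ξ‖^2 / β)) * exp (-(‖ξ‖^2 / α)) =
     exp (-(‖x‖^2 / (α+β))) * exp (-((1/α+1/β) * ‖ξ - (α/(α+β)) • x‖^2)) := by
    intro ξ
    rw [← exp_add, ← exp_add, @norm_sub_sq_real, @norm_sub_sq_real, norm_smul, inner_smul_right,
      real_inner_comm x ξ, mul_pow, Real.norm_eq_abs, sq_abs]
    congr 1
    field_simp
    ring
  simp_rw [key, ENNReal.ofReal_mul (exp_pos _).le]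
  rw [lintegral_const_mul' _ _ ENNReal.ofReal_ne_top,
    lintegral_sub_right_eq_self (fun ξ : EuclideanSpace ℝ (Fin n) => ENNReal.ofReal (exp (-((1/α+1/β) * ‖ξ‖^2)))),
    gauss0 hp, ← ENNReal.ofReal_mul (exp_pos _).le, mul_comm]
  congr 3
  field_simp
  ring

end Bub

end

section
open MeasureTheory Real

namespace Bub

noncomputable abbrev m2 : Measure (ℝ × ℝ) := mo.prod mo

lemma m2_ae : ∀ᵐ z ∂m2, 0 < z.1 ∧ 0 < z.2 := by
  have : m2 = (volume.prod volume).restrict (Set.Ioi (0:ℝ) ×ˢ Set.Ioi (0:ℝ)) :=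
    Measure.prod_restrict _ _
  rw [this]
  filter_upwards [ae_restrict_mem (measurableSet_Ioi.prod measurableSet_Ioi)] with z hz
  exact hz

lemma m2_congr {f g : ℝ × ℝ → ENNReal} (h : ∀ s t, 0 < s → 0 < t → f (s, t) = g (s, t)) :
    ∫⁻ z, f z ∂m2 = ∫⁻ z, g z ∂m2 := by
  refine lintegral_congr_ae ?_
  filter_upwards [m2_ae] with z hz
  exact h z.1 z.2 hz.1 hz.2

noncomputable def R (γ d y : ℝ) (z : ℝ × ℝ) : ℝ :=
  y ^ (2*γ) * (z.1 ^ (γ-1) * z.2 ^ (-γ-1) * (z.1 + z.2) ^ (-d) * exp (-(1/z.1)) * exp (-(y^2/z.2)))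

lemma R_meas (γ d y : ℝ) : Measurable (R γ d y) := by
  unfold R
  fun_prop

lemma R_nonneg {γ d y : ℝ} {z : ℝ × ℝ} (hy : 0 < y) (h1 : 0 < z.1) (h2 : 0 < z.2) : 0 ≤ R γ d y z := by
  unfold R
  positivity

lemma R_lt_top {γ d y : ℝ} (hy : 0 < y) (hγ : 0 < γ) (hd : γ < d) :
    ∫⁻ z, ENNReal.ofReal (R γ d y z) ∂m2 < ⊤ := by
  have hd' : 0 < d - γ := by linarith
  calc ∫⁻ z, ENNReal.ofReal (R γ d y z) ∂m2 ≤ ∫⁻ z, ENNReal.ofReal (y^(2*γ)) *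
        (ENNReal.ofReal (z.1 ^ (-(d-γ)-1) * exp (-(1/z.1))) *
          ENNReal.ofReal (z.2 ^ (-γ-1) * exp (-(y^2/z.2)))) ∂m2 := by
        refine lintegral_mono_ae ?_
        filter_upwards [m2_ae] with z hz
        obtain ⟨h1, h2⟩ := hz
        rw [← ENNReal.ofReal_mul (by positivity), ← ENNReal.ofReal_mul (by positivity)]
        refine ENNReal.ofReal_le_ofReal ?_
        unfold R
        have : (z.1 + z.2) ^ (-d) ≤ z.1 ^ (-d) :=
          rpow_le_rpow_of_nonpos h1 (by linarith) (by linarith)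
        refine mul_le_mul_of_nonneg_left ?_ (by positivity)
        calc _ ≤ z.1 ^ (γ-1) * z.2 ^ (-γ-1) * z.1 ^ (-d) * exp (-(1/z.1)) * exp (-(y^2/z.2)) := by
              gcongr
          _ = _ := by
              rw [show -(d-γ)-1 = (γ-1) + -d by ring, rpow_add h1]
              ring
    _ < ⊤ := by
      rw [lintegral_const_mul' _ _ ENNReal.ofReal_ne_top,
        lintegral_prod_mul (f := fun t => ENNReal.ofReal (t ^ (-(d-γ)-1) * exp (-(1/t))))
         (g := fun t => ENNReal.ofReal (t ^ (-γ-1) * exp (-(y^2/t)))) (by fun_prop) (by fun_prop),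
        mo_invgamma hd' one_pos, mo_invgamma hγ (by positivity)]
      exact ENNReal.mul_lt_top ENNReal.ofReal_lt_top
        (ENNReal.mul_lt_top ENNReal.ofReal_lt_top ENNReal.ofReal_lt_top)

lemma R_int {γ d y : ℝ} (hy : 0 < y) (hγ : 0 < γ) (hd : γ < d) : Integrable (R γ d y) m2 := by
  refine ⟨(R_meas γ d y).aestronglyMeasurable, ?_⟩
  rw [hasFiniteIntegral_iff_ofReal]
  · exact R_lt_top hy hγ hd
  · filter_upwards [m2_ae] with z hz
    exact R_nonneg hy hz.1 hz.2

noncomputable def Ψ {n : ℕ} (γ d y : ℝ) (x : EuclideanSpace ℝ (Fin n)) : ENNReal :=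
  ∫⁻ z, ENNReal.ofReal (R γ d y z * exp (-(‖x‖^2/(z.1+z.2)))) ∂m2

noncomputable def C0 (γ n : ℝ) : ℝ := π ^ (n/2) / (Gamma ((n-2*γ)/2) * Gamma ((n+2*γ)/2))

variable {n : ℕ}

lemma Ψ_lt_top {γ d y : ℝ} (hy : 0 < y) (hγ : 0 < γ) (hd : γ < d) (x : EuclideanSpace ℝ (Fin n)) :
    Ψ γ d y x < ⊤ := by
  refine lt_of_le_of_lt ?_ (R_lt_top hy hγ hd)
  refine lintegral_mono_ae ?_
  filter_upwards [m2_ae] with z hz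
  refine ENNReal.ofReal_le_ofReal ?_
  have h1 := hz.1
  have h2 := hz.2
  refine mul_le_of_le_one_right (R_nonneg hy hz.1 hz.2) ?_
  rw [exp_le_one_iff, neg_nonpos]
  positivity

lemma Ψ_real {γ d y : ℝ} (hy : 0 < y) (x : EuclideanSpace ℝ (Fin n)) :
    ∫ z, R γ d y z * exp (-(‖x‖^2/(z.1+z.2))) ∂m2 = (Ψ γ d y x).toReal := by
  rw [integral_eq_lintegral_of_nonneg_ae, Ψ]
  · filter_upwards [m2_ae] with z hz
    exact mul_nonneg (R_nonneg hy hz.1 hz.2) (exp_pos _).le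
  · exact ((R_meas γ d y).mul (by fun_prop)).aestronglyMeasurable

lemma U_lint {γ y : ℝ} (hγ : 0 < γ) (hn : 4 + 2*γ < (n:ℝ)) (hy : 0 < y) (x : EuclideanSpace ℝ (Fin n)) :
    ∫⁻ ξ : EuclideanSpace ℝ (Fin n), ENNReal.ofReal
        (y ^ (2*γ) * (‖x - ξ‖^2 + y^2) ^ (-(((n:ℝ) + 2*γ)/2)) *
          (1 + ‖ξ‖^2) ^ (-(((n:ℝ) - 2*γ)/2))) = ENNReal.ofReal (C0 γ n) * Ψ γ ((n:ℝ)/2) y x := by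
  have hs1 : 0 < ((n:ℝ) - 2*γ)/2 := by linarith
  have hs2 : 0 < ((n:ℝ) + 2*γ)/2 := by linarith
  have hG1 := Gamma_pos_of_pos hs1
  have hG2 := Gamma_pos_of_pos hs2
  set s1 := ((n:ℝ) - 2*γ)/2 with hs1d
  set s2 := ((n:ℝ) + 2*γ)/2 with hs2d
  have h1 : ∀ ξ : EuclideanSpace ℝ (Fin n), ENNReal.ofReal
        (y ^ (2*γ) * (‖x - ξ‖^2 + y^2) ^ (-s2) * (1 + ‖ξ‖^2) ^ (-s1)) =
      ENNReal.ofReal (1 / (Gamma s1 * Gamma s2)) * (ENNReal.ofReal (y^(2*γ)) *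
        ∫⁻ z, ENNReal.ofReal (z.1 ^ (-s1-1) * exp (-((1 + ‖ξ‖^2)/z.1))) *
          ENNReal.ofReal (z.2 ^ (-s2-1) * exp (-((‖x - ξ‖^2 + y^2)/z.2))) ∂m2) := by
    intro ξ
    rw [lintegral_prod_mul (f := fun t => ENNReal.ofReal (t ^ (-s1-1) * exp (-((1 + ‖ξ‖^2)/t))))
         (g := fun t => ENNReal.ofReal (t ^ (-s2-1) * exp (-((‖x - ξ‖^2 + y^2)/t)))) (by fun_prop) (by fun_prop),
      mo_invgamma hs1 (by positivity), mo_invgamma hs2 (by positivity),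
      ← ENNReal.ofReal_mul (by positivity), ← ENNReal.ofReal_mul (by positivity),
      ← ENNReal.ofReal_mul (by positivity)]
    congr 1
    field_simp
  simp_rw [h1]
  rw [lintegral_const_mul' _ _ ENNReal.ofReal_ne_top, lintegral_const_mul' _ _ ENNReal.ofReal_ne_top,
    lintegral_lintegral_swap (by fun_prop)]
  have hC : C0 γ n = (1 / (Gamma s1 * Gamma s2)) * π ^ ((n:ℝ)/2) := by
    rw [C0]; ring
  rw [hC, ENNReal.ofReal_mul (by positivity), mul_assoc]
  congr 1
  rw [Ψ, ← lintegral_const_mul' _ _ ENNReal.ofReal_ne_top, ← lintegral_const_mul' _ _ ENNReal.ofReal_ne_top]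
  refine m2_congr fun s t hs ht => ?_
  have h2 : ∀ ξ : EuclideanSpace ℝ (Fin n), ENNReal.ofReal (s ^ (-s1-1) * exp (-((1 + ‖ξ‖^2)/s))) *
          ENNReal.ofReal (t ^ (-s2-1) * exp (-((‖x - ξ‖^2 + y^2)/t))) =
      ENNReal.ofReal (s ^ (-s1-1) * t ^ (-s2-1) * exp (-(1/s)) * exp (-(y^2/t))) *
       ENNReal.ofReal (exp (-(‖x - ξ‖^2 / t)) * exp (-(‖ξ‖^2 / s))) := by
    intro ξ
    rw [← ENNReal.ofReal_mul (by positivity), ← ENNReal.ofReal_mul (by positivity)]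
    congr 1
    rw [add_div, add_div, neg_add, neg_add, exp_add, exp_add]
    ring
  simp only
  simp_rw [h2]
  rw [lintegral_const_mul' _ _ ENNReal.ofReal_ne_top, gauss_conv x hs ht,
    ← ENNReal.ofReal_mul (by positivity), ← ENNReal.ofReal_mul (by positivity),
    ← ENNReal.ofReal_mul (by positivity)]
  congr 1
  unfold R
  simp only
  have hst : 0 < s + t := by linarith
  rw [mul_rpow pi_pos.le (by positivity), div_rpow (by positivity) hst.le, mul_rpow hs.le ht.le,
    rpow_neg hst.le, show γ - 1 = (-s1-1) + (n:ℝ)/2 by rw [hs1d]; ring,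
    show -γ - 1 = (-s2-1) + (n:ℝ)/2 by rw [hs2d]; ring, rpow_add hs, rpow_add ht]
  ring

lemma U_eq {γ y : ℝ} (hγ : 0 < γ) (hn : 4 + 2*γ < (n:ℝ)) (hy : 0 < y) (x : EuclideanSpace ℝ (Fin n)) :
    ∫ ξ : EuclideanSpace ℝ (Fin n), 
        (y ^ (2*γ) * (‖x - ξ‖^2 + y^2) ^ (-(((n:ℝ) + 2*γ)/2)) *
          (1 + ‖ξ‖^2) ^ (-(((n:ℝ) - 2*γ)/2))) = C0 γ n * (Ψ γ ((n:ℝ)/2) y x).toReal := by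
  have hG1 := Gamma_pos_of_pos (show 0 < ((n:ℝ) - 2*γ)/2 by linarith)
  have hG2 := Gamma_pos_of_pos (show 0 < ((n:ℝ) + 2*γ)/2 by linarith)
  have hC : 0 ≤ C0 γ n := by unfold C0; positivity
  rw [integral_eq_lintegral_of_nonneg_ae, U_lint hγ hn hy x, ENNReal.toReal_mul, ENNReal.toReal_ofReal hC]
  · exact Filter.Eventually.of_forall fun ξ => by simp only [Pi.zero_apply]; positivity
  · exact Measurable.aestronglyMeasurable (by fun_prop)

lemma Ψ_deriv {γ d y : ℝ} (hγ : 0 < γ) (hd : γ < d) (hy : 0 < y) (x : EuclideanSpace ℝ (Fin n)) (i : Fin n) :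
    HasDerivAt (fun t : ℝ => (Ψ γ d y (x + t • EuclideanSpace.single i (1:ℝ))).toReal)
      (-(2 * x i) * (Ψ γ (d+1) y x).toReal) 0 := by
  simp_rw [← Ψ_real hy]
  have hnorm : ∀ t : ℝ, ‖x + t • EuclideanSpace.single i (1:ℝ)‖^2 = ‖x‖^2 + 2 * x i * t + t^2 := by
    intro t
    rw [@norm_add_sq_real, inner_smul_right, norm_smul, EuclideanSpace.inner_single_right]
    simp
    ring
  simp_rw [hnorm]
  have key := hasDerivAt_integral_of_dominated_loc_of_deriv_le (μ := m2) (s := Metric.ball (0:ℝ) 1) (x₀ := (0:ℝ))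
    (F := fun t z => R γ d y z * exp (-((‖x‖^2 + 2 * x i * t + t^2)/(z.1+z.2))))
    (F' := fun t z => R γ d y z * (exp (-((‖x‖^2 + 2 * x i * t + t^2)/(z.1+z.2))) *
      (-((2 * x i + 2 * t)/(z.1+z.2)))))
    (bound := fun z => (2 * |x i| + 2) * R γ (d+1) y z)
    (Metric.ball_mem_nhds _ one_pos)
    (Filter.Eventually.of_forall fun t => ((R_meas γ d y).mul (by fun_prop)).aestronglyMeasurable)
    ?_ ((R_meas γ d y).mul (by fun_prop)).aestronglyMeasurable ?_ ((R_int hy hγ (by linarith)).const_mul _) ?_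
  · have h := key.2
    convert! h using 1
    rw [← integral_const_mul]
    refine integral_congr_ae ?_
    filter_upwards [m2_ae] with z hz
    obtain ⟨h1, h2⟩ := hz
    have h12 : 0 < z.1 + z.2 := by linarith
    unfold R
    rw [neg_add, rpow_add h12, rpow_neg_one]
    simp
    field_simp
  · refine (R_int hy hγ hd).mono ((R_meas γ d y).mul (by fun_prop)).aestronglyMeasurable ?_
    filter_upwards [m2_ae] with z hz
    obtain ⟨h1, h2⟩ := hz
    rw [norm_mul]
    refine mul_le_of_le_one_right (norm_nonneg _) ?_
    rw [Real.norm_eq_abs, abs_of_pos (exp_pos _), exp_le_one_iff, neg_nonpos]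
    simp
    positivity
  · filter_upwards [m2_ae] with z hz t ht
    obtain ⟨h1, h2⟩ := hz
    have h12 : 0 < z.1 + z.2 := by linarith
    rw [norm_mul, norm_mul, Real.norm_of_nonneg (R_nonneg hy h1 h2)]
    have hR : R γ (d+1) y z = R γ d y z * (z.1+z.2)⁻¹ := by
      unfold R
      rw [neg_add, rpow_add h12, rpow_neg_one]
      ring
    have he : ‖exp (-((‖x‖^2 + 2 * x i * t + t^2)/(z.1+z.2)))‖ ≤ 1 := by
      rw [Real.norm_eq_abs, abs_of_pos (exp_pos _), exp_le_one_iff, neg_nonpos, ← hnorm]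
      positivity
    have ht' : |t| ≤ 1 := by
      simp at ht
      exact ht.le
    have hb : ‖-((2 * x i + 2 * t)/(z.1+z.2))‖ ≤ (2 * |x i| + 2) * (z.1+z.2)⁻¹ := by
      rw [norm_neg, norm_div, Real.norm_of_nonneg h12.le, div_eq_mul_inv]
      gcongr
      rw [Real.norm_eq_abs]
      calc |2 * x i + 2 * t| ≤ |2 * x i| + |2 * t| := abs_add_le _ _
        _ = 2 * |x i| + 2 * |t| := by simp [abs_mul]
        _ ≤ _ := by linarith
    calc _ ≤ R γ d y z * (1 * ((2 * |x i| + 2) * (z.1+z.2)⁻¹)) := by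
          refine mul_le_mul_of_nonneg_left ?_ (R_nonneg hy h1 h2)
          exact mul_le_mul he hb (norm_nonneg _) zero_le_one
      _ = _ := by rw [hR]; ring
  · refine Filter.Eventually.of_forall fun z t _ => ?_
    refine HasDerivAt.const_mul _ (HasDerivAt.exp ?_)
    refine HasDerivAt.neg (HasDerivAt.div_const ?_ _)
    have := (((hasDerivAt_id t).const_mul (2 * x i)).const_add (‖x‖^2)).add ((hasDerivAt_id t).pow 2)
    convert! this using 1
    simp

end Bub

end

section
open MeasureTheory Real

namespace Bub
variable {n : ℕ}

lemma Ψ_meas (γ d : ℝ) :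
    Measurable (fun p : ℝ × EuclideanSpace ℝ (Fin n) => Ψ γ d p.1 p.2) := by
  unfold Ψ R
  refine Measurable.lintegral_prod_right (ν := m2) ?_
  fun_prop

lemma real_of_lint (g : ℝ → EuclideanSpace ℝ (Fin n) → ℝ)
    (hg : Measurable (fun p : ℝ × EuclideanSpace ℝ (Fin n) => g p.1 p.2))
    (h0 : ∀ y, 0 < y → ∀ x, 0 ≤ g y x)
    (hfin : ∫⁻ y, ∫⁻ x, ENNReal.ofReal (g y x) ∂volume ∂mo ≠ ⊤) :
    ∫ y in Set.Ioi (0:ℝ), ∫ x, g y x = (∫⁻ y, ∫⁻ x, ENNReal.ofReal (g y x) ∂volume ∂mo).toReal := by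
  have hm : Measurable (fun y => ∫⁻ x, ENNReal.ofReal (g y x)) :=
    Measurable.lintegral_prod_right' (f := fun p : ℝ × EuclideanSpace ℝ (Fin n) => ENNReal.ofReal (g p.1 p.2))
      hg.ennreal_ofReal
  rw [← integral_toReal hm.aemeasurable (ae_lt_top hm hfin)]
  refine setIntegral_congr_fun measurableSet_Ioi fun y hy => ?_
  rw [integral_eq_lintegral_of_nonneg_ae]
  · exact Filter.Eventually.of_forall fun x => h0 y hy x
  · exact (hg.comp (measurable_prodMk_left (x := y))).aestronglyMeasurable

lemma sq_swap {X Z : Type*} [MeasurableSpace X] [MeasurableSpace Z] (μ : Measure X) (ν : Measure Z)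
    [SFinite μ] [SFinite ν] (F : X → ENNReal) (hF : Measurable F) (K : X → Z → ENNReal)
    (hK : Measurable (fun p : X × Z => K p.1 p.2)) :
    ∫⁻ x, F x * (∫⁻ z, K x z ∂ν)^2 ∂μ = ∫⁻ z, ∫⁻ z', ∫⁻ x, F x * (K x z * K x z') ∂μ ∂ν ∂ν := by
  have hKx : ∀ x, Measurable (K x) := fun x => hK.comp measurable_prodMk_left
  have h1 : ∀ x, F x * (∫⁻ z, K x z ∂ν)^2 = ∫⁻ z, ∫⁻ z', F x * (K x z * K x z') ∂ν ∂ν := by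
    intro x
    have : ∀ z, ∫⁻ z', F x * (K x z * K x z') ∂ν = (F x * ∫⁻ z', K x z' ∂ν) * K x z := by
      intro z
      rw [lintegral_const_mul _ ((hKx x).const_mul _), lintegral_const_mul _ (hKx x)]
      ring
    simp_rw [this]
    rw [lintegral_const_mul _ (hKx x)]
    ring
  simp_rw [h1]
  have hm1 : Measurable (fun q : (X × Z) × Z => F q.1.1 * (K q.1.1 q.1.2 * K q.1.1 q.2)) := by
    have a1 : Measurable (fun q : (X × Z) × Z => K q.1.1 q.1.2) := hK.comp measurable_fst
    have a2 : Measurable (fun q : (X × Z) × Z => K q.1.1 q.2) :=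
      hK.comp ((measurable_fst.comp measurable_fst).prodMk measurable_snd)
    have a3 : Measurable (fun q : (X × Z) × Z => F q.1.1) := hF.comp (measurable_fst.comp measurable_fst)
    exact a3.mul (a1.mul a2)
  rw [lintegral_lintegral_swap (Measurable.lintegral_prod_right' hm1).aemeasurable]
  refine lintegral_congr fun z => ?_
  rw [lintegral_lintegral_swap]
  refine Measurable.aemeasurable ?_
  exact hm1.comp (((measurable_fst.prodMk measurable_const)).prodMk measurable_snd)

lemma reorder (f : ℝ → ℝ → ℝ → ℝ → ENNReal)
    (hf : Measurable (fun p : ℝ × ℝ × ℝ × ℝ => f p.1 p.2.1 p.2.2.1 p.2.2.2)) :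
    ∫⁻ z, ∫⁻ z', f z.1 z'.1 z.2 z'.2 ∂m2 ∂m2 = 
    ∫⁻ α, ∫⁻ α', ∫⁻ β, ∫⁻ β', f α α' β β' ∂mo ∂mo ∂mo ∂mo := by
  have m1 : Measurable (fun q : (ℝ × ℝ) × (ℝ × ℝ) => f q.1.1 q.2.1 q.1.2 q.2.2) := by
    exact hf.comp (f := fun q : (ℝ × ℝ) × (ℝ × ℝ) => (q.1.1, q.2.1, q.1.2, q.2.2)) (by fun_prop)
  rw [lintegral_prod _ (Measurable.lintegral_prod_right' m1).aemeasurable]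
  refine lintegral_congr fun α => ?_
  have h2 : ∀ β, ∫⁻ z', f α z'.1 β z'.2 ∂m2 = ∫⁻ α', ∫⁻ β', f α α' β β' ∂mo ∂mo := by
    intro β
    rw [lintegral_prod]
    exact (hf.comp (f := fun q : (ℝ × ℝ) => (α, q.1, β, q.2)) (by fun_prop)).aemeasurable
  simp only [h2]
  rw [lintegral_lintegral_swap]
  refine Measurable.aemeasurable ?_
  exact Measurable.lintegral_prod_right' (f := fun q : (ℝ × ℝ) × ℝ => f α q.1.2 q.1.1 q.2)
    (hf.comp (f := fun q : (ℝ × ℝ) × ℝ => (α, q.1.2, q.1.1, q.2)) (by fun_prop))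

lemma master {γ d : ℝ} (hγ : 0 < γ) (hd : γ < d)
    (F : EuclideanSpace ℝ (Fin n) → ℝ) (hF : Measurable F) (hF0 : ∀ x, 0 ≤ F x) (κ : ℝ → ℝ) (hκ0 : ∀ p, 0 < p → 0 ≤ κ p)
    (hκ : ∀ p, 0 < p → ∫⁻ x, ENNReal.ofReal (F x * exp (-(p * ‖x‖^2))) = ENNReal.ofReal (κ p))
    (f : ℝ → ℝ → ℝ → ℝ → ℝ) (hf : Measurable (fun p : ℝ × ℝ × ℝ × ℝ => f p.1 p.2.1 p.2.2.1 p.2.2.2))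
    (C : ℝ) (hC : 0 ≤ C)
    (hid : ∀ α α' β β', 0 < α → 0 < α' → 0 < β → 0 < β' → 
      (1/2 * Gamma (2+γ)) * (α^(γ-1) * α'^(γ-1) * exp (-(1/α)) * exp (-(1/α')) *
        (β * β' * (β+β')^(-(2+γ)))) * ((α+β)^(-d) * (α'+β')^(-d) * κ (1/(α+β) + 1/(α'+β'))) = C * f α α' β β') :
    ∫⁻ y, ∫⁻ x, ENNReal.ofReal (y ^ ((1 - 2*γ) + 2) * F x * ((Ψ γ d y x).toReal)^2) ∂volume ∂mo =
      ENNReal.ofReal C * ∫⁻ α, ∫⁻ α', ∫⁻ β, ∫⁻ β', ENNReal.ofReal (f α α' β β') ∂mo ∂mo ∂mo ∂mo := by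
  have e1 : ∫⁻ y, ∫⁻ x, ENNReal.ofReal (y ^ ((1 - 2*γ) + 2) * F x * ((Ψ γ d y x).toReal)^2) ∂volume ∂mo =
     ∫⁻ y, ∫⁻ x, ENNReal.ofReal (y ^ ((1 - 2*γ) + 2) * F x) * (Ψ γ d y x)^2 ∂volume ∂mo := by
    refine mo_congr fun y hy => lintegral_congr fun x => ?_
    have := hF0 x
    rw [ENNReal.ofReal_mul (by positivity), ENNReal.ofReal_pow ENNReal.toReal_nonneg,
      ENNReal.ofReal_toReal (Ψ_lt_top hy hγ hd x).ne]
  have hFm : Measurable (fun p : ℝ × EuclideanSpace ℝ (Fin n) => ENNReal.ofReal (p.1 ^ ((1 - 2*γ) + 2) * F p.2)) := by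
    fun_prop
  have e2 := lintegral_prod (μ := mo) (ν := (volume : Measure (EuclideanSpace ℝ (Fin n))))
    (fun p => ENNReal.ofReal (p.1 ^ ((1 - 2*γ) + 2) * F p.2) * (Ψ γ d p.1 p.2)^2)
    (hFm.mul ((Ψ_meas γ d).pow_const 2)).aemeasurable
  rw [e1, ← e2, ← reorder (fun a b c d => ENNReal.ofReal (f a b c d)) hf.ennreal_ofReal]
  unfold Ψ
  rw [sq_swap (mo.prod (volume : Measure (EuclideanSpace ℝ (Fin n)))) m2 _ hFm (fun p z => _) (by unfold R; fun_prop),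
    ← lintegral_const_mul' _ _ ENNReal.ofReal_ne_top]
  refine m2_congr fun α β hα hβ => ?_
  rw [← lintegral_const_mul' _ _ ENNReal.ofReal_ne_top]
  refine m2_congr fun α' β' hα' hβ' => ?_
  simp only
  rw [← ENNReal.ofReal_mul hC, ← hid α α' β β' hα hα' hβ hβ']
  have hb : 0 < 1/β + 1/β' := by positivity
  have hp : 0 < 1/(α+β) + 1/(α'+β') := by positivity
  have e3 : ∫⁻ p : ℝ × EuclideanSpace ℝ (Fin n), ENNReal.ofReal (p.1 ^ (1 - 2*γ + 2) * F p.2) *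
      (ENNReal.ofReal (R γ d p.1 (α, β) * exp (-(‖p.2‖^2/(α+β)))) *
       ENNReal.ofReal (R γ d p.1 (α', β') * exp (-(‖p.2‖^2/(α'+β'))))) ∂(mo.prod volume) =
      ∫⁻ p : ℝ × EuclideanSpace ℝ (Fin n), ENNReal.ofReal (α^(γ-1) * α'^(γ-1) * exp (-(1/α)) * exp (-(1/α')) *
        (β^(-γ-1) * β'^(-γ-1)) * ((α+β)^(-d) * (α'+β')^(-d))) * 
        (ENNReal.ofReal (p.1 ^ (3+2*γ) * exp (-((1/β+1/β') * p.1^2))) * 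
        ENNReal.ofReal (F p.2 * exp (-((1/(α+β) + 1/(α'+β')) * ‖p.2‖^2)))) ∂(mo.prod volume) := by
    refine lintegral_congr_ae ?_
    have hae : ∀ᵐ p : ℝ × EuclideanSpace ℝ (Fin n) ∂(mo.prod volume), 0 < p.1 :=
      Measure.quasiMeasurePreserving_fst.ae (ae_restrict_mem measurableSet_Ioi)
    filter_upwards [hae] with p hp1
    have := hF0 p.2
    rw [← ENNReal.ofReal_mul (by unfold R; positivity), ← ENNReal.ofReal_mul (by positivity),
      ← ENNReal.ofReal_mul (by positivity), ← ENNReal.ofReal_mul (by positivity)]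
    congr 1
    have hh : p.1 ^ (3 + 2*γ) = p.1 ^ (1 - 2*γ+2) * p.1 ^ (2*γ) * p.1 ^ (2*γ) := by
      rw [← rpow_add hp1, ← rpow_add hp1]
      congr 1
      ring
    unfold R
    simp only
    rw [show -((1/β+1/β') * p.1^2) = -(p.1^2/β) + -(p.1^2/β') by ring,
      show -((1/(α+β) + 1/(α'+β')) * ‖p.2‖^2) = -(‖p.2‖^2/(α+β)) + -(‖p.2‖^2/(α'+β')) by ring,
      exp_add, exp_add, hh]
    ring
  rw [e3, lintegral_const_mul' _ _ ENNReal.ofReal_ne_top,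
    lintegral_prod_mul (f := fun t : ℝ => ENNReal.ofReal (t ^ (3+2*γ) * exp (-((1/β+1/β') * t^2))))
      (g := fun x : EuclideanSpace ℝ (Fin n) => ENNReal.ofReal (F x * exp (-((1/(α+β) + 1/(α'+β')) * ‖x‖^2))))
      (by fun_prop) (by fun_prop), hκ _ hp, mo_gauss (by linarith) hb]
  have hk := hκ0 _ hp
  have hG := Gamma_pos_of_pos (show 0 < (3 + 2*γ + 1)/2 by linarith)
  rw [← ENNReal.ofReal_mul (by positivity), ← ENNReal.ofReal_mul (by positivity)]
  congr 1
  have hbb : 0 < β + β' := by linarith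
  rw [show (3 + 2*γ+1)/2 = 2 + γ by ring, show 1/β+1/β' = (β+β') * (β⁻¹ * β'⁻¹) by field_simp; ring,
    mul_rpow hbb.le (by positivity), mul_rpow (by positivity) (by positivity),
    inv_rpow hβ.le, inv_rpow hβ'.le, ← rpow_neg hβ.le, ← rpow_neg hβ'.le, neg_neg]
  have t1 : β ^ (-γ-1) * β ^ (2+γ) = β := by rw [← rpow_add hβ]; ring_nf; rw [rpow_one]
  have t2 : β' ^ (-γ-1) * β' ^ (2+γ) = β' := by rw [← rpow_add hβ']; ring_nf; rw [rpow_one]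
  rw [show β * β' = (β ^ (-γ-1) * β ^ (2+γ)) * (β' ^ (-γ-1) * β' ^ (2+γ)) by rw [t1, t2]]
  ring

end Bub

end

section
open MeasureTheory Real

namespace Bub
variable {n : ℕ}

noncomputable def fI (p p' q q' c d α α' β β' : ℝ) : ℝ :=
  (α ^ (p-1) * α' ^ (p'-1) * exp (-(1/α)) * exp (-(1/α'))) *
    (β ^ (q-1) * β' ^ (q'-1) * (β + β') ^ (-c) * ((α + α') + (β + β')) ^ (-d))

lemma fI_nonneg {p p' q q' c d α α' β β' : ℝ} (h1 : 0 < α) (h2 : 0 < α') (h3 : 0 < β) (h4 : 0 < β') :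
    0 ≤ fI p p' q q' c d α α' β β' := by
  unfold fI
  positivity

lemma I_eq (p p' q q' c d : ℝ) : I p p' q q' c d =
    ∫⁻ α, ∫⁻ α', ∫⁻ β, ∫⁻ β', ENNReal.ofReal (fI p p' q q' c d α α' β β') ∂mo ∂mo ∂mo ∂mo := rfl

lemma fI_meas (p p' q q' c d : ℝ) :
    Measurable (fun x : ℝ × ℝ × ℝ × ℝ => fI p p' q q' c d x.1 x.2.1 x.2.2.1 x.2.2.2) := by
  unfold fI
  fun_prop

lemma quad (f : ℝ → ℝ → ℝ → ℝ → ENNReal)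
    (hf : Measurable (fun p : ℝ × ℝ × ℝ × ℝ => f p.1 p.2.1 p.2.2.1 p.2.2.2)) :
    ∫⁻ α, ∫⁻ α', ∫⁻ β, ∫⁻ β', f α α' β β' ∂mo ∂mo ∂mo ∂mo =
      ∫⁻ p, f p.1 p.2.1 p.2.2.1 p.2.2.2 ∂(mo.prod (mo.prod (mo.prod mo))) := by
  rw [lintegral_prod _ hf.aemeasurable]
  refine lintegral_congr fun α => ?_
  have h1 : Measurable (fun p : ℝ × ℝ × ℝ => f α p.1 p.2.1 p.2.2) :=
    hf.comp (f := fun p : ℝ × ℝ × ℝ => (α, p.1, p.2.1, p.2.2)) (by fun_prop)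
  try simp only
  rw [lintegral_prod _ h1.aemeasurable]
  refine lintegral_congr fun α' => ?_
  have h2 : Measurable (fun p : ℝ × ℝ => f α α' p.1 p.2) :=
    hf.comp (f := fun p : ℝ × ℝ => (α, α', p.1, p.2)) (by fun_prop)
  try simp only
  rw [lintegral_prod _ h2.aemeasurable]

lemma quad_add (f g : ℝ → ℝ → ℝ → ℝ → ℝ)
    (hf : Measurable (fun p : ℝ × ℝ × ℝ × ℝ => f p.1 p.2.1 p.2.2.1 p.2.2.2))
    (hg : Measurable (fun p : ℝ × ℝ × ℝ × ℝ => g p.1 p.2.1 p.2.2.1 p.2.2.2))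
    (hf0 : ∀ α α' β β', 0 < α → 0 < α' → 0 < β → 0 < β' → 0 ≤ f α α' β β')
    (hg0 : ∀ α α' β β', 0 < α → 0 < α' → 0 < β → 0 < β' → 0 ≤ g α α' β β') :
    ∫⁻ α, ∫⁻ α', ∫⁻ β, ∫⁻ β', ENNReal.ofReal (f α α' β β' + g α α' β β') ∂mo ∂mo ∂mo ∂mo =
    ∫⁻ α, ∫⁻ α', ∫⁻ β, ∫⁻ β', ENNReal.ofReal (f α α' β β') ∂mo ∂mo ∂mo ∂mo +
    ∫⁻ α, ∫⁻ α', ∫⁻ β, ∫⁻ β', ENNReal.ofReal (g α α' β β') ∂mo ∂mo ∂mo ∂mo := by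
  rw [quad (fun a b c d => ENNReal.ofReal (f a b c d)) hf.ennreal_ofReal,
    quad (fun a b c d => ENNReal.ofReal (g a b c d)) hg.ennreal_ofReal,
    ← lintegral_add_left hf.ennreal_ofReal,
    ← quad (fun a b c d => ENNReal.ofReal (f a b c d) + ENNReal.ofReal (g a b c d))
      (hf.ennreal_ofReal.add hg.ennreal_ofReal)]
  refine mo_congr fun α hα => mo_congr fun α' hα' => mo_congr fun β hβ => mo_congr fun β' hβ' => ?_
  rw [ENNReal.ofReal_add (hf0 _ _ _ _ hα hα' hβ hβ') (hg0 _ _ _ _ hα hα' hβ hβ')]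

lemma kap {s t m : ℝ} (hs : 0 < s) (ht : 0 < t) :
    (π/(1/s+1/t))^m = π^m * (s^m * t^m * (s+t)^(-m)) := by
  have hst : 0 < s + t := by linarith
  rw [show π/(1/s+1/t) = π * (s * t * (s+t)⁻¹) by field_simp; ring, mul_rpow pi_pos.le (by positivity),
    mul_rpow (by positivity) (by positivity), mul_rpow hs.le ht.le, inv_rpow hst.le, rpow_neg hst.le]

lemma J0 {γ : ℝ} (h0 : 0 < γ) (hn : 4 + 2*γ < (n:ℝ)) :
    ∫⁻ y, ∫⁻ x : EuclideanSpace ℝ (Fin n), ENNReal.ofReal (y ^ ((1 - 2*γ) + 2) * 1 * ((Ψ γ ((n:ℝ)/2) y x).toReal)^2) ∂volume ∂mo =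
     ENNReal.ofReal (1/2 * Gamma (2+γ) * π^((n:ℝ)/2)) * I γ γ 2 2 (2+γ) ((n:ℝ)/2) := by
  have hG := Gamma_pos_of_pos (show 0 < 2 + γ by linarith)
  rw [I_eq]
  refine master (n := n) h0 (by linarith) (fun _ => 1) measurable_const (fun _ => zero_le_one)
    (fun p => (π/p)^((n:ℝ)/2)) (fun p hp => by positivity) (fun p hp => by simpa using gauss0 hp) 
    (fI γ γ 2 2 (2+γ) ((n:ℝ)/2)) (fI_meas _ _ _ _ _ _) _ (by positivity) ?_
  intro α α' β β' hα hα' hβ hβ'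
  have hs : 0 < α + β := by linarith
  have ht : 0 < α' + β' := by linarith
  try simp only
  rw [kap hs ht]
  have a1 : (α+β)^(-((n:ℝ)/2)) * (α+β)^((n:ℝ)/2) = 1 := by rw [← rpow_add hs]; simp
  have a2 : (α'+β')^(-((n:ℝ)/2)) * (α'+β')^((n:ℝ)/2) = 1 := by rw [← rpow_add ht]; simp
  unfold fI
  rw [show (2:ℝ)-1 = 1 by norm_num, rpow_one, rpow_one, show α + α' + (β+β') = α + β + (α'+β') by ring]
  generalize (α+β)^(-((n:ℝ)/2)) = A1 at *
  generalize (α+β)^(((n:ℝ)/2)) = A2 at *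
  generalize (α'+β')^(-((n:ℝ)/2)) = A3 at *
  generalize (α'+β')^(((n:ℝ)/2)) = A4 at *
  generalize (α + β + (α'+β'))^(-((n:ℝ)/2)) = A5 at *
  generalize (β+β')^(-(2+γ)) = A6
  calc _ = (1 / 2 * Gamma (2 + γ) *
        (α ^ (γ - 1) * α' ^ (γ - 1) * rexp (-(1 / α)) * rexp (-(1 / α')) * (β * β' * A6))) *
      (π ^ ((n:ℝ)/2) * A5) * ((A1 * A2) * (A3 * A4)) := by ring
    _ = _ := by rw [a1, a2]; ring

lemma J1 {γ : ℝ} (h0 : 0 < γ) (hn : 4 + 2*γ < (n:ℝ)) {i j : Fin n} (hij : i ≠ j) :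
    ∫⁻ y, ∫⁻ x : EuclideanSpace ℝ (Fin n), ENNReal.ofReal (y ^ ((1 - 2*γ) + 2) * ((x i)^2 * (x j)^2) * ((Ψ γ ((n:ℝ)/2+1) y x).toReal)^2) ∂volume ∂mo =
     ENNReal.ofReal (1/4 * (1/2 * Gamma (2+γ) * π^((n:ℝ)/2))) *
       (I (γ+1) (γ+1) 2 2 (2+γ) ((n:ℝ)/2+2) + I (γ+1) γ 2 3 (2+γ) ((n:ℝ)/2+2) + I γ (γ+1) 3 2 (2+γ) ((n:ℝ)/2+2)
     + I γ γ 3 3 (2+γ) ((n:ℝ)/2+2)) := by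
  have hG := Gamma_pos_of_pos (show 0 < 2 + γ by linarith)
  have M := fun p p' q q' c d => fI_meas p p' q q' c d
  have N := fun p p' q q' c d α α' β β' (h1 : 0 < α) (h2 : 0 < α') (h3 : 0 < β) (h4 : 0 < β') =>
    fI_nonneg (p := p) (p' := p') (q := q) (q' := q') (c := c) (d := d) h1 h2 h3 h4
  simp only [I_eq]
  rw [← quad_add _ _ (M _ _ _ _ _ _) (M _ _ _ _ _ _) (N _ _ _ _ _ _) (N _ _ _ _ _ _),
    ← quad_add _ _ ((M _ _ _ _ _ _).add (M _ _ _ _ _ _)) (M _ _ _ _ _ _)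
      (fun a b c d h1 h2 h3 h4 => add_nonneg (N _ _ _ _ _ _ a b c d h1 h2 h3 h4) (N _ _ _ _ _ _ a b c d h1 h2 h3 h4))
      (N _ _ _ _ _ _),
    ← quad_add _ _ (((M _ _ _ _ _ _).add (M _ _ _ _ _ _)).add (M _ _ _ _ _ _)) (M _ _ _ _ _ _)
      (fun a b c d h1 h2 h3 h4 => add_nonneg (add_nonneg (N _ _ _ _ _ _ a b c d h1 h2 h3 h4)
         (N _ _ _ _ _ _ a b c d h1 h2 h3 h4)) (N _ _ _ _ _ _ a b c d h1 h2 h3 h4))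
      (N _ _ _ _ _ _)]
  refine master (n := n) h0 (by linarith) (fun x => (x i)^2 * (x j)^2) (by fun_prop) (fun _ => by positivity)
    (fun p => (1/(2*p))^2 * (π/p)^((n:ℝ)/2)) (fun p hp => by positivity) (fun p hp => gauss2 hij hp) 
    (fun a b c d => fI _ _ _ _ _ _ a b c d + fI _ _ _ _ _ _ a b c d + fI _ _ _ _ _ _ a b c d + fI _ _ _ _ _ _ a b c d)
    ((((M _ _ _ _ _ _).add (M _ _ _ _ _ _)).add (M _ _ _ _ _ _)).add (M _ _ _ _ _ _)) _ (by positivity) ?_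
  intro α α' β β' hα hα' hβ hβ'
  have hs : 0 < α + β := by linarith
  have ht : 0 < α' + β' := by linarith
  try simp only
  rw [kap hs ht]
  have a1 : (α+β)^(-((n:ℝ)/2+1)) * (α+β)^((n:ℝ)/2) * (α+β) = 1 := by
    rw [← rpow_add hs, ← rpow_add_one hs.ne']; ring_nf; simp
  have a2 : (α'+β')^(-((n:ℝ)/2+1)) * (α'+β')^((n:ℝ)/2) * (α'+β') = 1 := by
    rw [← rpow_add ht, ← rpow_add_one ht.ne']; ring_nf; simp
  have hst : 0 < (α+β) + (α'+β') := by linarith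
  have a3 : (α + β + (α'+β'))^(-((n:ℝ)/2)) = (α + β + (α'+β'))^(-((n:ℝ)/2+2)) * (α + β + (α'+β'))^2 := by
    rw [← rpow_natCast (α + β + (α'+β')) 2, ← rpow_add hst]
    congr 1
    push_cast
    ring
  have a4 : α ^ γ = α ^ (γ-1) * α := by rw [← rpow_add_one hα.ne']; ring_nf
  have a5 : α' ^ γ = α' ^ (γ-1) * α' := by rw [← rpow_add_one hα'.ne']; ring_nf
  unfold fI
  rw [show (2:ℝ)-1 = 1 by norm_num, show (3:ℝ)-1 = 2 by norm_num, show γ+1-1 = γ by ring]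
  simp only [rpow_one, rpow_two]
  rw [show α + α' + (β+β') = α + β + (α'+β') by ring, a3, a4, a5]
  generalize (α+β)^(-((n:ℝ)/2+1)) = A1 at *
  generalize (α+β)^(((n:ℝ)/2)) = A2 at *
  generalize (α'+β')^(-((n:ℝ)/2+1)) = A3 at *
  generalize (α'+β')^(((n:ℝ)/2)) = A4 at *
  generalize (α + β + (α'+β'))^(-((n:ℝ)/2+2)) = A5 at *
  generalize (β+β')^(-(2+γ)) = A6
  have a6 : (1/(2*(1/(α+β) + 1/(α'+β'))))^2 * (α+β+(α'+β'))^2 = 1/4 * ((α+β)*(α'+β'))^2 := by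
    rw [show 1/(2*(1/(α+β) + 1/(α'+β'))) = (α+β)*(α'+β') / (2 * (α+β+(α'+β'))) by field_simp; ring]
    field_simp
    ring
  calc _ = (1 / 2 * Gamma (2 + γ) *
        (α ^ (γ - 1) * α' ^ (γ - 1) * rexp (-(1 / α)) * rexp (-(1 / α')) * (β * β' * A6))) *
      (π ^ ((n:ℝ)/2) * A5) * ((A1 * A2) * (A3 * A4)) *
      ((1/(2*(1/(α+β) + 1/(α'+β'))))^2 * (α+β+(α'+β'))^2) := by ring
    _ = (1 / 2 * Gamma (2 + γ) *
        (α ^ (γ - 1) * α' ^ (γ - 1) * rexp (-(1 / α)) * rexp (-(1 / α')) * (β * β' * A6))) *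
      (π ^ ((n:ℝ)/2) * A5) * ((A1 * A2 * (α+β)) * (A3 * A4 * (α'+β'))) * (1/4 * ((α+β) * (α'+β'))) := by
        rw [a6]; ring
    _ = _ := by rw [a1, a2]; ring

lemma coef_nonneg {γ n : ℝ} (h0 : 0 < γ) (h1 : γ < 1) (hn : 4 + 2 * γ < n) :
   0 ≤ (5*n^3 - 10*n^2 - ((1-2*γ)^2 - 2*(1-2*γ) + 25)*n - 2*(1-2*γ)^2 + 4*(1-2*γ) + 30)
        / (20*n*(n+2)*(n-3)) := by
  have hm : 0 < n - 4 := by linarith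
  refine div_nonneg ?_ ?_
  · obtain ⟨m, rfl⟩ : ∃ m, n = m + 4 := ⟨n - 4, by ring⟩
    have hm' : 0 < m := by linarith
    have : γ^2 ≤ 1 := by nlinarith
    have h3 : 0 ≤ (1 - γ^2) * m := by nlinarith
    nlinarith [pow_pos hm' 3, pow_pos hm' 2]
  · have : 0 < n := by linarith
    have : 0 < n - 3 := by linarith
    positivity

end Bub

end

open MeasureTheory Real in
theorem stmt_11 (γ : ℝ) (hγ : γ ∈ Set.Ioo (0:ℝ) 1) (a : ℝ) (ha : a = 1 - 2*γ)
    (n : ℕ) (hn : 4 + 2*γ < (n:ℝ))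
    (w : EuclideanSpace ℝ (Fin n) → ℝ)
    (hw : ∀ x : EuclideanSpace ℝ (Fin n), w x = (1 + ‖x‖^2) ^ (-(((n:ℝ) - 2*γ)/2)))
    (U : EuclideanSpace ℝ (Fin n) → ℝ → ℝ)
    (hU : ∀ x : EuclideanSpace ℝ (Fin n), ∀ y : ℝ,
      U x y = ∫ ξ : EuclideanSpace ℝ (Fin n),
        y ^ (2*γ) * (‖x - ξ‖^2 + y^2) ^ (-(((n:ℝ) + 2*γ)/2)) * w ξ) :
    ∫ y in Set.Ioi (0:ℝ), ∫ x : EuclideanSpace ℝ (Fin n),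
      y ^ (a+2) * (x ⟨0, by exact_mod_cast show (0:ℝ) < (n:ℝ) by linarith [hγ.1]⟩) *
        (x ⟨1, by exact_mod_cast show (1:ℝ) < (n:ℝ) by linarith [hγ.1]⟩) *
        (deriv (fun t : ℝ => U (x + t • EuclideanSpace.single
          ⟨0, by exact_mod_cast show (0:ℝ) < (n:ℝ) by linarith [hγ.1]⟩ 1) y) 0) *
        (deriv (fun t : ℝ => U (x + t • EuclideanSpace.single
          ⟨1, by exact_mod_cast show (1:ℝ) < (n:ℝ) by linarith [hγ.1]⟩ 1) y) 0) =
    ((5*(n:ℝ)^3 - 10*(n:ℝ)^2 - (a^2 - 2*a + 25)*(n:ℝ) - 2*a^2 + 4*a + 30)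
        / (20*(n:ℝ)*((n:ℝ)+2)*((n:ℝ)-3))) *
      ∫ y in Set.Ioi (0:ℝ), ∫ x : EuclideanSpace ℝ (Fin n), y ^ (a+2) * (U x y)^2 := by
  obtain ⟨h0, h1⟩ := hγ
  subst ha
  have hU' : ∀ y, 0 < y → ∀ x, U x y = Bub.C0 γ n * (Bub.Ψ γ ((n:ℝ)/2) y x).toReal := by
    intro y hy x
    rw [hU]
    simp_rw [hw]
    exact Bub.U_eq h0 hn hy x
  have hD : ∀ y, 0 < y → ∀ x (i : Fin n), deriv (fun t : ℝ => U (x + t • EuclideanSpace.single i 1) y) 0 =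
      -(2 * x i) * (Bub.C0 γ n * (Bub.Ψ γ ((n:ℝ)/2+1) y x).toReal) := by
    intro y hy x i
    simp_rw [hU' y hy]
    rw [((Bub.Ψ_deriv h0 (by linarith) hy x i).const_mul (Bub.C0 γ n)).deriv]
    ring
  generalize hi : (⟨0, by exact_mod_cast show (0:ℝ) < (n:ℝ) by linarith⟩ : Fin n) = i
  generalize hj : (⟨1, by exact_mod_cast show (1:ℝ) < (n:ℝ) by linarith⟩ : Fin n) = j
  have hij : i ≠ j := by
    rw [← hi, ← hj]
    simp
  have e1 : ∫ y in Set.Ioi (0:ℝ), ∫ x : EuclideanSpace ℝ (Fin n),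
      y ^ (1 - 2*γ+2) * (x i) * (x j) *
        (deriv (fun t : ℝ => U (x + t • EuclideanSpace.single i 1) y) 0) *
        (deriv (fun t : ℝ => U (x + t • EuclideanSpace.single j 1) y) 0) =
     4 * (Bub.C0 γ n)^2 * ∫ y in Set.Ioi (0:ℝ), ∫ x : EuclideanSpace ℝ (Fin n),
      y ^ (1 - 2*γ+2) * ((x i)^2 * (x j)^2) * ((Bub.Ψ γ ((n:ℝ)/2+1) y x).toReal)^2 := by
    rw [← integral_const_mul]
    refine setIntegral_congr_fun measurableSet_Ioi fun y hy => ?_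
    try simp only
    rw [← integral_const_mul]
    refine integral_congr_ae (Filter.Eventually.of_forall fun x => ?_)
    try simp only
    rw [hD y hy, hD y hy]
    ring
  have e2 : ∫ y in Set.Ioi (0:ℝ), ∫ x : EuclideanSpace ℝ (Fin n), y ^ (1 - 2*γ+2) * (U x y)^2 =
      (Bub.C0 γ n)^2 * ∫ y in Set.Ioi (0:ℝ), ∫ x : EuclideanSpace ℝ (Fin n),
      y ^ (1 - 2*γ+2) * 1 * ((Bub.Ψ γ ((n:ℝ)/2) y x).toReal)^2 := by
    rw [← integral_const_mul]
    refine setIntegral_congr_fun measurableSet_Ioi fun y hy => ?_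
    try simp only
    rw [← integral_const_mul]
    refine integral_congr_ae (Filter.Eventually.of_forall fun x => ?_)
    try simp only
    rw [hU' y hy]
    ring
  rw [e1, e2]
  obtain ⟨hr, hfin⟩ := Bub.final_ratio h0 h1 hn
  have j0 := Bub.J0 h0 hn
  have j1 := Bub.J1 h0 hn hij
  rw [hr] at j1
  have hG := Gamma_pos_of_pos (show 0 < 2 + γ by linarith)
  rw [Bub.real_of_lint, Bub.real_of_lint, j0, j1]
  · simp only [ENNReal.toReal_mul]
    rw [ENNReal.toReal_ofReal (show 0 ≤ 1/4 * (1/2 * Gamma (2+γ) * π^((n:ℝ)/2)) by positivity),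
      ENNReal.toReal_ofReal (Bub.coef_nonneg h0 h1 hn),
      ENNReal.toReal_ofReal (show 0 ≤ 1/2 * Gamma (2+γ) * π^((n:ℝ)/2) by positivity)]
    ring
  · have := (Bub.Ψ_meas (n := n) γ ((n:ℝ)/2)).ennreal_toReal
    exact Measurable.mul (by fun_prop) (this.pow_const 2)
  · intro y hy x
    positivity
  · rw [j0]
    exact ENNReal.mul_ne_top ENNReal.ofReal_ne_top hfin
  · have := (Bub.Ψ_meas (n := n) γ ((n:ℝ)/2+1)).ennreal_toReal
    exact Measurable.mul (by fun_prop) (this.pow_const 2)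
  · intro y hy x
    positivity
  · rw [j1]
    exact ENNReal.mul_ne_top ENNReal.ofReal_ne_top (ENNReal.mul_ne_top ENNReal.ofReal_ne_top hfin)
end
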